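/- arXiv:1502.03740 — 4 statements merged into one kernel-verified Lean document; each statement's English description precedes it below -/
import Mathlib

section
/- Let I, J ⊆ ℝ be intervals, E a Banach space, F = End(E), and G : I → L^∞_loc(J; F) ∩ L¹(J; F) a map continuous with respect to the supremum distance on functions J → F and of bounded variation V with respect to the L¹(J; F) norm. Set N = exp(sup_{t∈I} ‖G(t)‖_{L¹(J;F)}). Then for every locally absolutely continuous f : I → ℝ with f(I) ⊆ J, the function A(t) = f'(t) · G(t)(f(t)) is locally Bochner integrable on I, and every evolution operator X for A in E satisfies ‖X(t, s)^{±1}‖ ≤ N² exp(N^{3+2N} V) for all s ≤ t in I. -/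
open MeasureTheory Set intervalIntegral

/-- `f` is absolutely continuous on the set `s`: for every `ε > 0` there is `δ > 0` such
that for every finite family of non-overlapping subintervals of `s` of total length `< δ`,
the total variation of `f` over them is `< ε`. -/
def AbsolutelyContinuousOn (f : ℝ → ℝ) (s : Set ℝ) : Prop :=
  ∀ ε > (0 : ℝ), ∃ δ > (0 : ℝ), ∀ n : ℕ, ∀ u v : ℕ → ℝ,
    (∀ i < n, u i ∈ s ∧ v i ∈ s ∧ u i ≤ v i) →
    (∀ i < n, ∀ j < n, i ≠ j → Set.Ioo (u i) (v i) ∩ Set.Ioo (u j) (v j) = ∅) →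
    (∑ i ∈ Finset.range n, (v i - u i)) < δ →
    (∑ i ∈ Finset.range n, |f (v i) - f (u i)|) < ε

/-- `f` is locally absolutely continuous on the interval `I`: absolutely continuous on
every compact subinterval of `I`. -/
def LocallyAbsolutelyContinuousOn (f : ℝ → ℝ) (I : Set ℝ) : Prop :=
  ∀ a ∈ I, ∀ b ∈ I, AbsolutelyContinuousOn f (Set.Icc a b)

/-- `f'` is the derivative of `f` relative to `I`, in the convention of the paper:
it is the derivative at points of differentiability and `0` elsewhere. -/
def IsDerivWithinOf (f' f : ℝ → ℝ) (I : Set ℝ) : Prop :=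
  ∀ t ∈ I, (DifferentiableWithinAt ℝ f I t → HasDerivWithinAt f (f' t) I t) ∧
    (¬ DifferentiableWithinAt ℝ f I t → f' t = 0)

/-- `y ∈ L^∞_loc(J; E)`: `y` is Bochner measurable on `J` and essentially bounded on
every compact subinterval of `J`. -/
def LocEssBdd {E : Type*} [NormedAddCommGroup E] (y : ℝ → E) (J : Set ℝ) : Prop :=
  AEStronglyMeasurable y (volume.restrict J) ∧
  ∀ a ∈ J, ∀ b ∈ J, ∃ M : ℝ, ∀ᵐ t ∂(volume.restrict (Set.uIcc a b)), ‖y t‖ ≤ M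

/-- An evolution operator for `A` in `E` on the interval `I`: for each `s ∈ I`,
`X(·, s)` is a continuous operator solution of `X' = A ∘ X` with `X(s,s) = id`. -/
def IsEvolutionOperator {E : Type*} [NormedAddCommGroup E] [NormedSpace ℝ E]
    (I : Set ℝ) (A : ℝ → E →L[ℝ] E) (X : ℝ → ℝ → E →L[ℝ] E) : Prop :=
  ∀ s ∈ I, ContinuousOn (fun t => X t s) I ∧ X s s = ContinuousLinearMap.id ℝ E ∧
    ∀ u ∈ I, ∀ t ∈ I, X t s - X u s = ∫ τ in u..t, (A τ).comp (X τ s)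

/-- The set of partition sums defining the total variation of
`G : I → L¹(J; F)` with respect to the `L¹(J; F)` norm. -/
def l1VarSums {F : Type*} [NormedAddCommGroup F] (G : ℝ → ℝ → F) (I J : Set ℝ) : Set ℝ :=
  {v | ∃ n : ℕ, ∃ a : ℕ → ℝ, (∀ i ≤ n, a i ∈ I) ∧ (∀ i < n, a i < a (i + 1)) ∧
    v = ∑ i ∈ Finset.range n, ∫ u in J, ‖G (a (i + 1)) u - G (a i) u‖}

section Helpers

open Filter Topology

variable {F : Type*} [NormedAddCommGroup F] [NormedSpace ℝ F]

lemma ac_of_dist_le {X Y Z : Type*} [PseudoMetricSpace X] [PseudoMetricSpace Y]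
    [PseudoMetricSpace Z] {f : ℝ → X} {g : ℝ → Y} {h : ℝ → Z} {a b K L : ℝ}
    (hg : AbsolutelyContinuousOnInterval g a b) (hh : AbsolutelyContinuousOnInterval h a b)
    (H : ∀ x ∈ uIcc a b, ∀ y ∈ uIcc a b,
      dist (f x) (f y) ≤ K * dist (g x) (g y) + L * dist (h x) (h y)) :
    AbsolutelyContinuousOnInterval f a b := by
  unfold AbsolutelyContinuousOnInterval at *
  apply squeeze_zero' ?_ ?_
    (by simpa using (hg.const_mul K).add (hh.const_mul L))
  · exact Filter.Eventually.of_forall <| fun _ ↦ Finset.sum_nonneg (fun i hi ↦ dist_nonneg)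
  rw [eventually_inf_principal]
  filter_upwards with E hE
  simp only [Finset.mul_sum, ← Finset.sum_add_distrib]
  apply Finset.sum_le_sum
  intro i hi
  exact H _ (hE.1 i hi).1 _ (hE.1 i hi).2

lemma ac_of_dist_le' {X Y : Type*} [PseudoMetricSpace X] [PseudoMetricSpace Y]
    {f : ℝ → X} {g : ℝ → Y} {a b K : ℝ}
    (hg : AbsolutelyContinuousOnInterval g a b)
    (H : ∀ x ∈ uIcc a b, ∀ y ∈ uIcc a b, dist (f x) (f y) ≤ K * dist (g x) (g y)) :
    AbsolutelyContinuousOnInterval f a b :=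
  ac_of_dist_le (L := 0) hg hg (fun x hx y hy => by simpa using H x hx y hy)

lemma ac_integral {p : ℝ → F} {a b : ℝ} (hp : IntervalIntegrable p volume a b) :
    AbsolutelyContinuousOnInterval (fun x => ∫ v in a..x, p v) a b := by
  refine ac_of_dist_le' (K := 1)
    (hp.norm.absolutelyContinuousOnInterval_intervalIntegral (c := a) left_mem_uIcc) ?_
  intro x hx y hy
  have h1 : IntervalIntegrable p volume a x := hp.mono_set (uIcc_subset_uIcc left_mem_uIcc hx)
  have h2 : IntervalIntegrable p volume a y := hp.mono_set (uIcc_subset_uIcc left_mem_uIcc hy)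
  rw [dist_eq_norm, dist_eq_norm, integral_interval_sub_left h1 h2,
    integral_interval_sub_left h1.norm h2.norm, one_mul]
  exact norm_integral_le_abs_integral_norm

/-- `P` is an absolutely continuous primitive of `p`. -/
def Prim (P p : ℝ → F) (a b : ℝ) : Prop :=
  AbsolutelyContinuousOnInterval P a b ∧ IntervalIntegrable p volume a b ∧
    ∀ᵐ x, x ∈ uIcc a b → HasDerivAt P (p x) x

lemma ae_ne (a : ℝ) : ∀ᵐ x : ℝ, x ≠ a := by simp [ae_iff, measure_singleton]

lemma Prim.of_integral [CompleteSpace F] {P p : ℝ → F} {a b : ℝ} (hab : a ≤ b)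
    (hp : IntervalIntegrable p volume a b)
    (H : ∀ x ∈ Icc a b, P x = P a + ∫ v in a..x, p v) : Prim P p a b := by
  refine ⟨?_, hp, ?_⟩
  · refine ac_of_dist_le' (K := 1) (ac_integral hp) ?_
    intro x hx y hy
    rw [uIcc_of_le hab] at hx hy
    rw [H x hx, H y hy]
    simp
  · filter_upwards [hp.ae_hasDerivAt_integral, ae_ne a, ae_ne b] with x hx ha hb hxx
    have h1 := (hx hxx a left_mem_uIcc).const_add (P a)
    rw [uIcc_of_le hab] at hxx
    refine h1.congr_of_eventuallyEq ?_
    filter_upwards [Icc_mem_nhds (lt_of_le_of_ne hxx.1 (Ne.symm ha)) (lt_of_le_of_ne hxx.2 hb)]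
      with y hy using H y hy

lemma Prim.mono {P p : ℝ → F} {a b c d : ℝ} (h : Prim P p a b) (hs : uIcc c d ⊆ uIcc a b) :
    Prim P p c d := by
  refine ⟨h.1.mono hs, h.2.1.mono_set hs, ?_⟩
  filter_upwards [h.2.2] with x hx hxx using hx (hs hxx)

lemma Prim.integral_eq [CompleteSpace F] {P p : ℝ → F} {a b : ℝ} (h : Prim P p a b) :
    P b - P a = ∫ v in a..b, p v := by
  have h0 : AbsolutelyContinuousOnInterval (fun x => P x - ∫ v in a..x, p v) a b :=
    h.1.fun_sub (ac_integral h.2.1)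
  obtain ⟨C, hC⟩ := h0.const_of_ae_hasDerivAt_zero (by
    filter_upwards [h.2.2, h.2.1.ae_hasDerivAt_integral] with x h1 h2 hx
    simpa using (h1 hx).fun_sub (h2 hx a left_mem_uIcc))
  have ha := hC a left_mem_uIcc
  have hb := hC b right_mem_uIcc
  simp only [integral_same, sub_zero] at ha
  rw [ha, ← hb]; abel

lemma Prim.mul {R : Type*} [NormedRing R] [NormedAlgebra ℝ R] {P p Q q : ℝ → R} {a b : ℝ}
    (hP : Prim P p a b) (hQ : Prim Q q a b) :
    Prim (fun x => P x * Q x) (fun x => p x * Q x + P x * q x) a b := by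
  refine ⟨?_, ?_, ?_⟩
  · obtain ⟨C, hC⟩ := hP.1.exists_bound
    obtain ⟨D, hD⟩ := hQ.1.exists_bound
    refine ac_of_dist_le (K := D) (L := C) hP.1 hQ.1 ?_
    intro x hx y hy
    rw [dist_eq_norm, dist_eq_norm, dist_eq_norm]
    have : P x * Q x - P y * Q y = (P x - P y) * Q x + P y * (Q x - Q y) := by noncomm_ring
    rw [this]
    refine (norm_add_le _ _).trans (add_le_add ?_ ?_)
    · refine (norm_mul_le _ _).trans ?_
      rw [mul_comm]
      gcongr
      exact hD x hx
    · refine (norm_mul_le _ _).trans ?_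
      gcongr
      exact hC y hy
  · exact (hP.2.1.mul_continuousOn hQ.1.continuousOn).add
      (hQ.2.1.continuousOn_mul hP.1.continuousOn)
  · filter_upwards [hP.2.2, hQ.2.2] with x h1 h2 hx using (h1 hx).fun_mul (h2 hx)

lemma null_lemma (f : ℝ → ℝ) {B : Set ℝ} (hB : volume B = 0) :
    ∀ᵐ x, f x ∈ B → ∀ d, HasDerivAt f d x → d = 0 := by
  let S : ℕ → ℤ → Set ℝ := fun n k =>
    {x | f x ∈ B ∧ (∀ y, |y - x| < 1 / (n + 1 : ℝ) → |y - x| ≤ (n + 1 : ℝ) * |f y - f x|) ∧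
      ⌊(n + 1 : ℝ) * x⌋ = k}
  have hS : ∀ n k, volume (S n k) = 0 := by
    intro n k
    have hanti : AntilipschitzWith (n + 1 : NNReal) (fun x : S n k => f x) := by
      refine AntilipschitzWith.of_le_mul_dist ?_
      intro x y
      have hn : (0 : ℝ) < n + 1 := by positivity
      have h1 := x.2.2.2
      have h2 := y.2.2.2
      have h3 : |(x : ℝ) - y| < 1 / (n + 1 : ℝ) := by
        have := Int.abs_sub_lt_one_of_floor_eq_floor (h1.trans h2.symm)
        rw [← mul_sub, abs_mul, abs_of_pos hn] at this
        rw [lt_div_iff₀ hn]; linarith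
      have := y.2.2.1 x h3
      simpa [Subtype.dist_eq, Real.dist_eq] using this
    have h0 : volume ((fun x : S n k => f x) '' univ) = 0 := by
      refine measure_mono_null ?_ hB
      rintro _ ⟨x, -, rfl⟩
      exact x.2.1
    have h1 := hanti.le_hausdorffMeasure_image (d := 1) zero_le_one univ
    rw [hausdorffMeasure_real, h0, mul_zero] at h1
    have h2 := (isometry_subtype_coe (s := S n k)).hausdorffMeasure_image (d := 1)
      (Or.inl zero_le_one) univ
    rw [image_univ, Subtype.range_coe, hausdorffMeasure_real] at h2
    rw [h2]; exact le_antisymm h1 bot_le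
  have hU : volume (⋃ n, ⋃ k, S n k) = 0 := by
    simp only [measure_iUnion_null_iff]; exact hS
  rw [← compl_mem_ae_iff] at hU
  filter_upwards [hU] with x hx hxB d hd
  by_contra hd0
  apply hx
  have h1 := hd.isLittleO
  have hpos : 0 < |d| / 2 := by positivity
  have h2 := h1.def hpos
  obtain ⟨δ, hδ, h3⟩ := Metric.eventually_nhds_iff.1 h2
  obtain ⟨n, hn⟩ := exists_nat_gt (max (1 / δ) (2 / |d|))
  have hn1 : 1 / δ < n := (le_max_left _ _).trans_lt hn
  have hn2 : 2 / |d| < n := (le_max_right _ _).trans_lt hn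
  have hd' : 0 < |d| := abs_pos.2 hd0
  have hn0 : (0 : ℝ) < n + 1 := by positivity
  refine mem_iUnion.2 ⟨n, mem_iUnion.2 ⟨⌊(n + 1 : ℝ) * x⌋, hxB, ?_, rfl⟩⟩
  intro y hy
  have h4 := @h3 y (by
    rw [Real.dist_eq]; refine hy.trans ?_
    rw [div_lt_iff₀ hδ] at hn1
    rw [div_lt_iff₀ hn0]; nlinarith)
  simp only [Real.norm_eq_abs, smul_eq_mul] at h4
  have h5 : |(y - x) * d| ≤ |f y - f x| + |f y - f x - (y - x) * d| := by
    have := abs_sub_abs_le_abs_sub ((y - x) * d) (f y - f x)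
    rw [abs_sub_comm ((y - x) * d)] at this; linarith
  rw [abs_mul] at h5
  have h6 : |d| / 2 * |y - x| ≤ |f y - f x| := by nlinarith
  rw [div_lt_iff₀ hd'] at hn2
  have h7 : |y - x| ≤ (n * |d|) * |y - x| / 2 := by nlinarith [abs_nonneg (y - x)]
  nlinarith [abs_nonneg (f y - f x), (Nat.cast_nonneg n : (0:ℝ) ≤ n)]

lemma gronwall_real {y φ : ℝ → ℝ} {a b C : ℝ} (hab : a ≤ b) (hy : ContinuousOn y (Icc a b))
    (hφ : IntervalIntegrable φ volume a b) (h0 : ∀ x, 0 ≤ φ x)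
    (H : ∀ u ∈ Icc a b, y u ≤ C + ∫ v in a..u, φ v * y v) :
    y b ≤ C * Real.exp (∫ v in a..b, φ v) := by
  have hy' : ContinuousOn y (uIcc a b) := by rwa [uIcc_of_le hab]
  have hW : Prim (fun u => C + ∫ v in a..u, φ v * y v) (fun v => φ v * y v) a b :=
    Prim.of_integral hab (hφ.mul_continuousOn hy') (by simp)
  have hΦ : Prim (fun u => ∫ v in a..u, φ v) φ a b :=
    Prim.of_integral hab hφ (by simp)
  have hΦ0 : ∀ u ∈ Icc a b, 0 ≤ ∫ v in a..u, φ v := fun u hu =>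
    integral_nonneg hu.1 (fun _ _ => h0 _)
  have hE : Prim (fun u => Real.exp (-∫ v in a..u, φ v))
      (fun u => Real.exp (-∫ v in a..u, φ v) * (-φ u)) a b := by
    refine ⟨?_, ?_, ?_⟩
    · refine ac_of_dist_le' (K := 1) hΦ.1 ?_
      rw [uIcc_of_le hab]
      have key : ∀ s t : ℝ, 0 ≤ s → s ≤ t → |Real.exp (-s) - Real.exp (-t)| ≤ |s - t| := by
        intro s t hs hst
        have e1 : Real.exp (-t) ≤ Real.exp (-s) := Real.exp_le_exp.2 (by linarith)
        rw [abs_of_nonneg (by linarith), abs_of_nonpos (by linarith)]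
        have e2 : Real.exp (-t) = Real.exp (-s) * Real.exp (s - t) := by
          rw [← Real.exp_add]; ring_nf
        have e3 := Real.add_one_le_exp (s - t)
        have e4 : Real.exp (-s) ≤ 1 := Real.exp_le_one_iff.2 (by linarith)
        have e5 := Real.exp_pos (-s)
        rw [e2]
        nlinarith
      intro x hx z hz
      rw [Real.dist_eq, Real.dist_eq, one_mul]
      rcases le_total (∫ v in a..x, φ v) (∫ v in a..z, φ v) with h | h
      · exact key _ _ (hΦ0 x hx) h
      · rw [abs_sub_comm, abs_sub_comm (∫ v in a..x, φ v)]
        exact key _ _ (hΦ0 z hz) h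
    · exact hφ.neg.continuousOn_mul (Real.continuous_exp.comp_continuousOn hΦ.1.continuousOn.neg)
    · filter_upwards [hΦ.2.2] with x hx hxx using (hx hxx).fun_neg.exp
  have hD := (hW.mul hE).integral_eq
  have hle : ∫ v in a..b, (φ v * y v * Real.exp (-∫ v in a..v, φ v) +
      (C + ∫ v in a..v, φ v * y v) * (Real.exp (-∫ v in a..v, φ v) * (-φ v))) ≤ 0 := by
    refine (integral_mono_on hab (hW.mul hE).2.1 (g := fun _ => (0:ℝ)) (by simp) ?_).trans
      (by simp)
    intro x hx
    have := H x hx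
    have h3 := Real.exp_pos (-∫ v in a..x, φ v)
    have h4 := h0 x
    have h5 : 0 ≤ φ x * Real.exp (-∫ v in a..x, φ v) := by positivity
    nlinarith
  rw [← hD] at hle
  simp only [integral_same, add_zero, neg_zero, Real.exp_zero, mul_one] at hle
  have hb := H b (right_mem_Icc.2 hab)
  have h3 := Real.exp_pos (∫ v in a..b, φ v)
  rw [Real.exp_neg] at hle
  have : (C + ∫ v in a..b, φ v * y v) ≤ C * Real.exp (∫ v in a..b, φ v) := by
    rw [← div_le_iff₀ h3, div_eq_mul_inv]; linarith
  linarith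

lemma gronwall_real_rev {y φ : ℝ → ℝ} {a b C : ℝ} (hab : a ≤ b) (hy : ContinuousOn y (Icc a b))
    (hφ : IntervalIntegrable φ volume a b) (h0 : ∀ x, 0 ≤ φ x)
    (H : ∀ u ∈ Icc a b, y u ≤ C + ∫ v in u..b, φ v * y v) :
    y a ≤ C * Real.exp (∫ v in a..b, φ v) := by
  have := gronwall_real (y := fun x => y (-x)) (φ := fun x => φ (-x)) (a := -b) (b := -a) (C := C)
    (by linarith) (hy.comp continuous_neg.continuousOn (fun x hx => ⟨by linarith [hx.2], by linarith [hx.1]⟩))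
    (by simpa using (hφ.comp_sub_left 0).symm) (fun x => h0 _) (by
      intro u hu
      have := H (-u) ⟨by linarith [hu.2], by linarith [hu.1]⟩
      rw [intervalIntegral.integral_comp_neg (fun v => φ v * y v), neg_neg]
      exact this)
  rw [intervalIntegral.integral_comp_neg (fun v => φ v)] at this
  simpa using this

lemma Prim.gronwall [CompleteSpace F] {P p : ℝ → F} {φ : ℝ → ℝ} {a b : ℝ} (hab : a ≤ b)
    (h : Prim P p a b)
    (hφ : IntervalIntegrable φ volume a b) (h0 : ∀ x, 0 ≤ φ x)
    (H : ∀ᵐ x, x ∈ Icc a b → ‖p x‖ ≤ φ x * ‖P x‖) :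
    ‖P b‖ ≤ ‖P a‖ * Real.exp (∫ v in a..b, φ v) ∧
    ‖P a‖ ≤ ‖P b‖ * Real.exp (∫ v in a..b, φ v) := by
  have hc : ContinuousOn (fun x => ‖P x‖) (Icc a b) := by
    have := h.1.continuousOn.norm; rwa [uIcc_of_le hab] at this
  have hc' : ContinuousOn (fun x => ‖P x‖) (uIcc a b) := h.1.continuousOn.norm
  have hii := hφ.mul_continuousOn hc'
  have key : ∀ u ∈ Icc a b, ∀ v ∈ Icc a b, u ≤ v → ‖P v - P u‖ ≤ ∫ x in u..v, φ x * ‖P x‖ := by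
    intro u hu v hv huv
    have hs : uIcc u v ⊆ uIcc a b := by
      rw [uIcc_of_le huv, uIcc_of_le hab]; exact Icc_subset_Icc hu.1 hv.2
    rw [(h.mono hs).integral_eq]
    refine norm_integral_le_of_norm_le huv ?_ (hii.mono_set hs)
    filter_upwards [H] with x hx hxx using hx ⟨by linarith [hu.1, hxx.1], by linarith [hv.2, hxx.2]⟩
  constructor
  · refine gronwall_real (y := fun x => ‖P x‖) hab hc hφ h0 ?_
    intro u hu
    have h1 := key a (left_mem_Icc.2 hab) u hu hu.1
    have h2 := norm_sub_norm_le (P u) (P a)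
    linarith
  · refine gronwall_real_rev (y := fun x => ‖P x‖) hab hc hφ h0 ?_
    intro u hu
    have h1 := key u hu b (right_mem_Icc.2 hab) hu.2
    have h2 := norm_sub_norm_le (P u) (P b)
    rw [norm_sub_rev] at h2
    linarith

lemma smul_comp_integrable {f f' : ℝ → ℝ} {a b M : ℝ} {h : ℝ → F} (hab : a ≤ b)
    (hf : ContinuousOn f (Icc a b)) (hf' : IntervalIntegrable f' volume a b)
    (hh : StronglyMeasurable h) (hM : ∀ u, ‖h u‖ ≤ M) :
    IntervalIntegrable (fun x => f' x • h (f x)) volume a b := by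
  refine (hf'.norm.const_mul M).mono_fun ?_ ?_
  · rw [uIoc_of_le hab]
    have h1 := hf'.aestronglyMeasurable
    have h2 : AEMeasurable f (volume.restrict (Ioc a b)) :=
      (hf.mono Ioc_subset_Icc_self).aemeasurable measurableSet_Ioc
    exact h1.smul (AEStronglyMeasurable.comp_aemeasurable hh.aestronglyMeasurable h2)
  · refine Filter.Eventually.of_forall fun x => ?_
    have hM0 : 0 ≤ M := (norm_nonneg _).trans (hM 0)
    show ‖f' x • h (f x)‖ ≤ ‖M * ‖f' x‖‖
    rw [norm_smul, norm_mul, norm_norm, Real.norm_of_nonneg hM0, mul_comm]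
    gcongr
    exact hM _

lemma Prim.chain [CompleteSpace F] {f f' : ℝ → ℝ} {a b c d M : ℝ} (hab : a ≤ b)
    (hf : Prim f f' a b)
    (hfc : ∀ x ∈ Icc a b, f x ∈ Icc c d) {H h : ℝ → F} (hh : StronglyMeasurable h)
    (hM : ∀ u, ‖h u‖ ≤ M) (hH : ∀ u ∈ Icc c d, H u = H c + ∫ v in c..u, h v) :
    Prim (fun x => H (f x)) (fun x => f' x • h (f x)) a b := by
  have hM0 : 0 ≤ M := (norm_nonneg _).trans (hM 0)
  have hcont : ContinuousOn f (Icc a b) := by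
    have := hf.1.continuousOn; rwa [uIcc_of_le hab] at this
  have hli : ∀ x y, IntervalIntegrable h volume x y := by
    intro x y
    refine (_root_.intervalIntegrable_const (c := M)).mono_fun hh.aestronglyMeasurable ?_
    refine Filter.Eventually.of_forall fun x => ?_
    simpa [abs_of_nonneg hM0] using hM x
  have hloc : LocallyIntegrable h volume := by
    refine (locallyIntegrable_const M).mono hh.aestronglyMeasurable ?_
    refine Filter.Eventually.of_forall fun x => ?_
    simpa [abs_of_nonneg hM0] using hM x
  let K : ℝ → F := fun u => H c + ∫ v in c..u, h v
  have hKlip : ∀ u v, dist (K u) (K v) ≤ M * dist u v := by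
    intro u v
    rw [dist_eq_norm, Real.dist_eq]
    have : K u - K v = ∫ x in v..u, h x := by
      simp only [K]
      rw [← integral_interval_sub_left (hli c u) (hli c v)]; abel
    rw [this]
    exact norm_integral_le_of_norm_le_const (fun x _ => hM x)
  have hKd : ∀ᵐ u, HasDerivAt K (h u) u := by
    filter_upwards [LocallyIntegrable.ae_hasDerivAt_integral hloc] with u hu using (hu c).const_add _
  have hnull := null_lemma f (B := {u | ¬ HasDerivAt K (h u) u}) hKd
  refine ⟨?_, smul_comp_integrable hab hcont hf.2.1 hh hM, ?_⟩
  · refine ac_of_dist_le' (K := M) hf.1 ?_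
    rw [uIcc_of_le hab]
    intro x hx y hy
    rw [hH _ (hfc x hx), hH _ (hfc y hy)]
    exact hKlip _ _
  · filter_upwards [hnull, hf.2.2, ae_ne a, ae_ne b] with x hx hd ha hb hxx
    have hd := hd hxx
    rw [uIcc_of_le hab] at hxx
    have hev : (fun x => H (f x)) =ᶠ[𝓝 x] (fun x => K (f x)) := by
      filter_upwards [Icc_mem_nhds (lt_of_le_of_ne hxx.1 (Ne.symm ha)) (lt_of_le_of_ne hxx.2 hb)]
        with y hy using hH _ (hfc y hy)
    refine HasDerivAt.congr_of_eventuallyEq ?_ hev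
    by_cases hB : HasDerivAt K (h (f x)) (f x)
    · exact hB.scomp x hd
    · have h0 := hx hB _ hd
      rw [h0] at hd ⊢
      rw [zero_smul]
      rw [hasDerivAt_iff_isLittleO] at hd ⊢
      simp only [smul_zero, sub_zero] at hd ⊢
      refine Asymptotics.IsBigO.trans_isLittleO ?_ hd
      refine Asymptotics.IsBigO.of_bound M (Filter.Eventually.of_forall fun y => ?_)
      rw [← dist_eq_norm, ← dist_eq_norm]
      exact hKlip _ _

lemma exists_linear_ode [CompleteSpace F] {B : ℝ → F →L[ℝ] F} {M : ℝ}
    (hB : StronglyMeasurable B) (hM : ∀ u, ‖B u‖ ≤ M) {c d : ℝ} (hcd : c ≤ d) (x0 : F) :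
    ∃ y : ℝ → F, Continuous y ∧ y c = x0 ∧
      ∀ u ∈ Icc c d, y u = x0 + ∫ v in c..u, B v (y v) := by
  have hM0 : 0 ≤ M := (norm_nonneg _).trans (hM 0)
  have hmeas : ∀ y : ℝ → F, Continuous y → StronglyMeasurable (fun v => B v (y v)) := fun y hy =>
    isBoundedBilinearMap_apply.continuous.comp_stronglyMeasurable (hB.prodMk hy.stronglyMeasurable)
  have hint : ∀ y : ℝ → F, Continuous y → ∀ u v,
      IntervalIntegrable (fun v => B v (y v)) volume u v := by
    intro y hy u v
    have h1 : IntervalIntegrable (fun v => M * ‖y v‖) volume u v :=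
      (continuous_const.mul hy.norm).intervalIntegrable _ _
    refine h1.mono_fun (hmeas y hy).aestronglyMeasurable (Filter.Eventually.of_forall fun x => ?_)
    show ‖B x (y x)‖ ≤ ‖M * ‖y x‖‖
    rw [Real.norm_of_nonneg (by positivity)]
    exact (B x).le_of_opNorm_le (hM x) _
  let y : ℕ → ℝ → F := fun n => Nat.rec (fun _ => x0) (fun _ z t => ∫ v in c..t, B v (z v)) n
  have y0 : y 0 = fun _ => x0 := rfl
  have ys : ∀ n, y (n + 1) = fun t => ∫ v in c..t, B v (y n v) := fun n => rfl
  have hyc : ∀ n, Continuous (y n) := by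
    intro n
    induction n with
    | zero => rw [y0]; exact continuous_const
    | succ n ih =>
      rw [ys]
      exact continuous_primitive (fun u v => hint _ ih u v) c
  have hbd : ∀ n, ∀ t, ‖y n t‖ ≤ ‖x0‖ * (M * |t - c|) ^ n / n.factorial := by
    intro n
    induction n with
    | zero => intro t; simp [y0]
    | succ n ih =>
      intro t
      rw [ys]
      dsimp only
      rw [norm_intervalIntegral_eq]
      have e : ∫ v in uIoc c t, M * (‖x0‖ * (M * |v - c|) ^ n / n.factorial) =
          ‖x0‖ * (M * |t - c|) ^ (n + 1) / (n + 1).factorial := by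
        have : ∀ v, M * (‖x0‖ * (M * |v - c|) ^ n / n.factorial) =
          (‖x0‖ * M ^ (n + 1) / n.factorial) * |v - c| ^ n := by intro v; rw [mul_pow]; ring
        simp_rw [this]
        rw [MeasureTheory.integral_const_mul, integral_pow_abs_sub_uIoc, Nat.factorial_succ,
          mul_pow]
        push_cast
        field_simp
      rw [← e]
      refine norm_integral_le_of_norm_le ?_ ?_
      · have : Continuous fun v => M * (‖x0‖ * (M * |v - c|) ^ n / n.factorial) := by fun_prop
        exact (this.intervalIntegrable c t).def'
      · refine Filter.Eventually.of_forall fun v => ?_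
        refine (B v).le_opNorm _ |>.trans ?_
        gcongr
        · exact hM v
        · exact ih v
  have hsum : Summable fun n : ℕ => ‖x0‖ * (M * (d - c)) ^ n / n.factorial := by
    have := (Real.summable_pow_div_factorial (M * (d - c))).mul_left ‖x0‖
    simpa [mul_div_assoc] using this
  have hbd' : ∀ n, ∀ t ∈ Icc c d, ‖y n t‖ ≤ ‖x0‖ * (M * (d - c)) ^ n / n.factorial := by
    intro n t ht
    refine (hbd n t).trans ?_
    have : |t - c| ≤ d - c := by rw [abs_of_nonneg (by linarith [ht.1])]; linarith [ht.2]
    gcongr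
  let Y : ℝ → F := fun t => ∑' n, y n t
  have hYc : ContinuousOn Y (Icc c d) :=
    continuousOn_tsum (fun n => (hyc n).continuousOn) hsum (fun n t ht => hbd' n t ht)
  have hYs : ∀ t ∈ Icc c d, HasSum (fun n => y n t) (Y t) := fun t ht =>
    (Summable.of_norm_bounded hsum (fun n => hbd' n t ht)).hasSum
  have hY : ∀ u ∈ Icc c d, Y u = x0 + ∫ v in c..u, B v (Y v) := by
    intro u hu
    have h1 : HasSum (fun n => ∫ v in c..u, B v (y n v)) (∫ v in c..u, B v (Y v)) := by
      refine hasSum_integral_of_dominated_convergence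
        (fun n _ => M * (‖x0‖ * (M * (d - c)) ^ n / n.factorial))
        (fun n => (hmeas _ (hyc n)).aestronglyMeasurable) ?_ ?_ ?_ ?_
      · intro n
        refine Filter.Eventually.of_forall fun v hv => ?_
        rw [uIoc_of_le hu.1] at hv
        refine (B v).le_opNorm _ |>.trans ?_
        gcongr
        · exact hM v
        · exact hbd' n v ⟨hv.1.le, hv.2.trans hu.2⟩
      · exact Filter.Eventually.of_forall fun v hv => hsum.mul_left M
      · exact _root_.intervalIntegrable_const
      · refine Filter.Eventually.of_forall fun v hv => ?_
        rw [uIoc_of_le hu.1] at hv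
        exact (hYs v ⟨hv.1.le, hv.2.trans hu.2⟩).mapL (B v)
    have h2 := hYs u hu
    rw [← h1.tsum_eq]
    have h3 := h2.summable.tsum_eq_zero_add
    exact h3
  refine ⟨IccExtend hcd ((Icc c d).domRestrict Y), hYc.domRestrict.Icc_extend', ?_, ?_⟩
  · rw [IccExtend_of_mem hcd _ (left_mem_Icc.2 hcd)]
    have := hY c (left_mem_Icc.2 hcd)
    rw [integral_same, add_zero] at this
    exact this
  · intro u hu
    rw [IccExtend_of_mem hcd _ hu]
    rw [domRestrict_apply]
    rw [hY u hu]
    congr 1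
    refine integral_congr fun v hv => ?_
    rw [uIcc_of_le hu.1] at hv
    have : v ∈ Icc c d := ⟨hv.1, hv.2.trans hu.2⟩
    rw [IccExtend_of_mem hcd _ this]
    rfl

/-- `Y`, `W` are the fundamental solution and its inverse for `g` on `[c,d]`. -/
structure Fund {R : Type*} [NormedRing R] [NormedAlgebra ℝ R] (g Y W : ℝ → R) (c d : ℝ) : Prop where
  contY : Continuous Y
  contW : Continuous W
  eqY : ∀ u ∈ Icc c d, Y u = Y c + ∫ v in c..u, g v * Y v
  eqW : ∀ u ∈ Icc c d, W u = W c + ∫ v in c..u, -(W v * g v)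
  Yc : Y c = 1
  Wc : W c = 1

section Ring

variable {R : Type*} [NormedRing R] [NormedAlgebra ℝ R]

lemma exists_fund [CompleteSpace R] {g : ℝ → R} {M c d : ℝ} (hcd : c ≤ d)
    (hg : StronglyMeasurable g) (hM : ∀ u, ‖g u‖ ≤ M) : ∃ Y W, Fund g Y W c d := by
  obtain ⟨Y, h1, h2, h3⟩ := exists_linear_ode (B := fun u => ContinuousLinearMap.mul ℝ R (g u))
    (M := M) ((ContinuousLinearMap.mul ℝ R).continuous.comp_stronglyMeasurable hg)
    (fun u => (ContinuousLinearMap.opNorm_mul_apply_le ℝ R _).trans (hM u)) hcd (1 : R)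
  obtain ⟨W, h4, h5, h6⟩ := exists_linear_ode
    (B := fun u => -(ContinuousLinearMap.mul ℝ R).flip (g u))
    (M := M) ((ContinuousLinearMap.mul ℝ R).flip.continuous.comp_stronglyMeasurable hg).neg
    (fun u => by
      rw [norm_neg]
      refine ContinuousLinearMap.opNorm_le_bound _ ((norm_nonneg _).trans (hM 0)) fun x => ?_
      simp only [ContinuousLinearMap.flip_apply, ContinuousLinearMap.mul_apply']
      refine (norm_mul_le _ _).trans ?_
      rw [mul_comm]
      gcongr
      exact hM u) hcd (1 : R)
  exact ⟨Y, W, h1, h4, fun u hu => by simpa [h2] using h3 u hu,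
    fun u hu => by simpa [h5] using h6 u hu, h2, h5⟩

lemma bdd_ii {F : Type*} [NormedAddCommGroup F] {g : ℝ → F} {M : ℝ} (hg : StronglyMeasurable g) (hM : ∀ u, ‖g u‖ ≤ M) (a b : ℝ) :
    IntervalIntegrable g volume a b := by
  have hM0 : 0 ≤ M := (norm_nonneg _).trans (hM 0)
  refine (_root_.intervalIntegrable_const (c := M)).mono_fun hg.aestronglyMeasurable ?_
  refine Filter.Eventually.of_forall fun x => ?_
  simpa [abs_of_nonneg hM0] using hM x

lemma Fund.primY [CompleteSpace R] {g Y W : ℝ → R} {M c d : ℝ} (h : Fund g Y W c d) (hcd : c ≤ d)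
    (hg : StronglyMeasurable g) (hM : ∀ u, ‖g u‖ ≤ M) : Prim Y (fun v => g v * Y v) c d :=
  Prim.of_integral hcd ((bdd_ii hg hM c d).mul_continuousOn h.contY.continuousOn) h.eqY

lemma Fund.primW [CompleteSpace R] {g Y W : ℝ → R} {M c d : ℝ} (h : Fund g Y W c d) (hcd : c ≤ d)
    (hg : StronglyMeasurable g) (hM : ∀ u, ‖g u‖ ≤ M) : Prim W (fun v => -(W v * g v)) c d :=
  Prim.of_integral hcd ((bdd_ii hg hM c d).continuousOn_mul h.contW.continuousOn).neg h.eqW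

lemma Icc_sub {c d u : ℝ} (hu : u ∈ Icc c d) : uIcc c u ⊆ uIcc c d := by
  rw [uIcc_of_le hu.1, uIcc_of_le (hu.1.trans hu.2)]; exact Icc_subset_Icc le_rfl hu.2

lemma int_le {φ : ℝ → ℝ} {c d u : ℝ} (hu : u ∈ Icc c d) (h0 : ∀ x, 0 ≤ φ x)
    (hφ : IntervalIntegrable φ volume c d) : ∫ v in c..u, φ v ≤ ∫ v in c..d, φ v :=
  integral_mono_interval le_rfl hu.1 hu.2 (Filter.Eventually.of_forall h0) hφ

lemma Fund.normY [CompleteSpace R] {g Y W : ℝ → R} {M c d : ℝ} (h : Fund g Y W c d)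
    (h1 : ‖(1 : R)‖ ≤ 1)
    (hg : StronglyMeasurable g) (hM : ∀ u, ‖g u‖ ≤ M) {u : ℝ} (hu : u ∈ Icc c d) :
    ‖Y u‖ ≤ Real.exp (∫ v in c..d, ‖g v‖) := by
  have hcd := hu.1.trans hu.2
  have := (((h.primY hcd hg hM).mono (Icc_sub hu)).gronwall (φ := fun v => ‖g v‖) hu.1
    (bdd_ii hg hM c u).norm (fun _ => norm_nonneg _)
    (Filter.Eventually.of_forall fun x _ => norm_mul_le _ _)).1
  rw [h.Yc] at this
  refine this.trans ?_
  have h3 := Real.exp_le_exp.2 (int_le hu (fun x => norm_nonneg (g x)) (bdd_ii hg hM c d).norm)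
  have := Real.exp_pos (∫ v in c..u, ‖g v‖)
  nlinarith [norm_nonneg (1 : R)]

lemma Fund.normW [CompleteSpace R] {g Y W : ℝ → R} {M c d : ℝ} (h : Fund g Y W c d)
    (h1 : ‖(1 : R)‖ ≤ 1)
    (hg : StronglyMeasurable g) (hM : ∀ u, ‖g u‖ ≤ M) {u : ℝ} (hu : u ∈ Icc c d) :
    ‖W u‖ ≤ Real.exp (∫ v in c..d, ‖g v‖) := by
  have hcd := hu.1.trans hu.2
  have := (((h.primW hcd hg hM).mono (Icc_sub hu)).gronwall (φ := fun v => ‖g v‖) hu.1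
    (bdd_ii hg hM c u).norm (fun _ => norm_nonneg _)
    (Filter.Eventually.of_forall fun x _ => by
      rw [norm_neg, mul_comm]; exact norm_mul_le _ _)).1
  rw [h.Wc] at this
  refine this.trans ?_
  have h3 := Real.exp_le_exp.2 (int_le hu (fun x => norm_nonneg (g x)) (bdd_ii hg hM c d).norm)
  have := Real.exp_pos (∫ v in c..u, ‖g v‖)
  nlinarith [norm_nonneg (1 : R)]

lemma Fund.YW [CompleteSpace R] {g Y W : ℝ → R} {M c d : ℝ} (h : Fund g Y W c d)
    (hg : StronglyMeasurable g) (hM : ∀ u, ‖g u‖ ≤ M) {u : ℝ} (hu : u ∈ Icc c d) :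
    Y u * W u = 1 := by
  have hcd := hu.1.trans hu.2
  have hP := ((h.primY hcd hg hM).mul (h.primW hcd hg hM)).mono (Icc_sub hu)
  have hQ : Prim (fun x => Y x * W x - 1) (fun x => g x * Y x * W x + Y x * -(W x * g x)) c u :=
    ⟨ac_of_dist_le' (K := 1) hP.1 (fun x _ y _ => by simp), hP.2.1, by
      filter_upwards [hP.2.2] with x hx hxx using (hx hxx).sub_const 1⟩
  have := (hQ.gronwall (φ := fun v => 2 * ‖g v‖) hu.1
    ((bdd_ii hg hM c u).norm.const_mul 2) (fun _ => by positivity)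
    (Filter.Eventually.of_forall fun x _ => by
      have : g x * Y x * W x + Y x * -(W x * g x) =
        g x * (Y x * W x - 1) - (Y x * W x - 1) * g x := by noncomm_ring
      rw [this]
      refine (norm_sub_le _ _).trans ?_
      have e1 := norm_mul_le (g x) (Y x * W x - 1)
      have e2 := norm_mul_le (Y x * W x - 1) (g x)
      linarith)).1
  rw [h.Yc, h.Wc, mul_one, sub_self, norm_zero, zero_mul] at this
  exact sub_eq_zero.1 (norm_le_zero_iff.1 this)

lemma Fund.trans_bound [CompleteSpace R] {g Y W g2 Y2 W2 : ℝ → R} {M M2 c d N : ℝ}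
    (h : Fund g Y W c d) (h2 : Fund g2 Y2 W2 c d) (h1 : ‖(1 : R)‖ ≤ 1)
    (hg : StronglyMeasurable g) (hM : ∀ u, ‖g u‖ ≤ M)
    (hg2 : StronglyMeasurable g2) (hM2 : ∀ u, ‖g2 u‖ ≤ M2)
    (hN : Real.exp (∫ v in c..d, ‖g v‖) ≤ N) (hN2 : Real.exp (∫ v in c..d, ‖g2 v‖) ≤ N)
    {u : ℝ} (hu : u ∈ Icc c d) :
    ‖W u * Y2 u‖ ≤ 1 + N ^ 2 * ∫ v in c..d, ‖g2 v - g v‖ := by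
  have hcd := hu.1.trans hu.2
  have hN0 : 0 ≤ N := (Real.exp_pos _).le.trans hN
  have hP := ((h.primW hcd hg hM).mul (h2.primY hcd hg2 hM2)).mono (Icc_sub hu)
  have e := hP.integral_eq
  rw [h.Wc, h2.Yc, mul_one] at e
  have hii : IntervalIntegrable (fun v => ‖g2 v - g v‖) volume c d :=
    ((bdd_ii hg2 hM2 c d).sub (bdd_ii hg hM c d)).norm
  have hb : ‖W u * Y2 u - 1‖ ≤ ∫ v in c..u, N ^ 2 * ‖g2 v - g v‖ := by
    rw [e]
    refine norm_integral_le_of_norm_le hu.1 ?_ ((hii.mono_set (Icc_sub hu)).const_mul _)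
    refine Filter.Eventually.of_forall fun x hx => ?_
    have hx' : x ∈ Icc c d := ⟨hx.1.le, hx.2.trans hu.2⟩
    have : -(W x * g x) * Y2 x + W x * (g2 x * Y2 x) = W x * (g2 x - g x) * Y2 x := by noncomm_ring
    rw [this]
    have n1 := (h.normW h1 hg hM hx').trans hN
    have n2 := (h2.normY h1 hg2 hM2 hx').trans hN2
    calc ‖W x * (g2 x - g x) * Y2 x‖ ≤ ‖W x‖ * ‖g2 x - g x‖ * ‖Y2 x‖ := by
          refine (norm_mul_le _ _).trans ?_
          gcongr
          exact norm_mul_le _ _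
      _ ≤ N * ‖g2 x - g x‖ * N := by gcongr
      _ = _ := by ring
  have hb2 := hb.trans (int_le hu (fun x => by positivity) (hii.const_mul _))
  rw [intervalIntegral.integral_const_mul] at hb2
  have := norm_add_le (W u * Y2 u - 1) 1
  rw [sub_add_cancel] at this
  linarith

lemma piece_bound [CompleteSpace R] {g Y W A X : ℝ → R} {f f' : ℝ → ℝ} {M c d N ε a b : ℝ}
    (h : Fund g Y W c d) (h1 : ‖(1 : R)‖ ≤ 1)
    (hg : StronglyMeasurable g) (hM : ∀ u, ‖g u‖ ≤ M) (hgs : ∀ u, u ∉ Icc c d → g u = 0)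
    (hN : Real.exp (∫ v in c..d, ‖g v‖) ≤ N)
    (hab : a ≤ b) (hf : Prim f f' a b) (hfc : ∀ x ∈ Icc a b, f x ∈ Icc c d)
    (hX : Prim X (fun x => A x * X x) a b) (hε : 0 ≤ ε)
    (hA : ∀ᵐ x, x ∈ Icc a b → ‖A x - f' x • g (f x)‖ ≤ ε * |f' x|) :
    ‖W (f b) * X b‖ ≤ ‖W (f a) * X a‖ * Real.exp (N ^ 2 * ε * ∫ x in a..b, |f' x|) ∧
    ‖W (f a) * X a‖ ≤ ‖W (f b) * X b‖ * Real.exp (N ^ 2 * ε * ∫ x in a..b, |f' x|) := by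
  have hN0 : 0 ≤ N := (Real.exp_pos _).le.trans hN
  have hM0 : 0 ≤ M := (norm_nonneg _).trans (hM 0)
  have hWn : ∀ u ∈ Icc c d, ‖W u‖ ≤ N := fun u hu => (h.normW h1 hg hM hu).trans hN
  have hYn : ∀ u ∈ Icc c d, ‖Y u‖ ≤ N := fun u hu => (h.normY h1 hg hM hu).trans hN
  have hZ1 : Prim (fun x => W (f x)) (fun x => f' x • -(W (f x) * g (f x))) a b := by
    refine hf.chain (h := fun v => -(W v * g v)) (M := N * M) hab hfc ?_ ?_ h.eqW
    · exact (h.contW.stronglyMeasurable.mul hg).neg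
    · intro u
      rw [norm_neg]
      by_cases hu : u ∈ Icc c d
      · refine (norm_mul_le _ _).trans ?_
        gcongr
        · exact hWn u hu
        · exact hM u
      · rw [hgs u hu, mul_zero, norm_zero]; positivity
  have := (hZ1.mul hX).gronwall (φ := fun x => N ^ 2 * ε * |f' x|) hab
    (hf.2.1.abs.const_mul _) (fun x => by positivity) (by
      filter_upwards [hA] with x hx hxx
      have hx := hx hxx
      have hfx := hfc x hxx
      have e : f' x • -(W (f x) * g (f x)) * X x + W (f x) * (A x * X x) =
        W (f x) * (A x - f' x • g (f x)) * (Y (f x) * (W (f x) * X x)) := by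
        rw [← mul_assoc (Y (f x)), h.YW hg hM hfx, one_mul, mul_sub, sub_mul, mul_smul_comm,
          smul_neg, neg_mul, mul_assoc]
        abel
      rw [e]
      calc _ ≤ ‖W (f x)‖ * ‖A x - f' x • g (f x)‖ * (‖Y (f x)‖ * ‖W (f x) * X x‖) := by
            refine (norm_mul_le _ _).trans ?_
            gcongr
            · exact norm_mul_le _ _
            · exact norm_mul_le _ _
        _ ≤ N * (ε * |f' x|) * (N * ‖W (f x) * X x‖) := by
            gcongr
            · exact hWn _ hfx
            · exact hYn _ hfx
        _ = _ := by ring)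
  rw [intervalIntegral.integral_const_mul] at this
  exact this

end Ring

lemma ac_convert {f : ℝ → ℝ} {a b : ℝ} (hab : a ≤ b) (h : AbsolutelyContinuousOn f (Icc a b)) :
    AbsolutelyContinuousOnInterval f a b := by
  rw [absolutelyContinuousOnInterval_iff]
  intro ε hε
  obtain ⟨δ, hδ, H⟩ := h ε hε
  refine ⟨δ, hδ, fun E hE hlt => ?_⟩
  have h1 := H E.1 (fun i => min (E.2 i).1 (E.2 i).2) (fun i => max (E.2 i).1 (E.2 i).2) ?_ ?_ ?_
  · refine lt_of_le_of_lt (le_of_eq ?_) h1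
    refine Finset.sum_congr rfl fun i _ => ?_
    rw [Real.dist_eq]
    rcases le_total (E.2 i).1 (E.2 i).2 with h | h
    · simp only [min_eq_left h, max_eq_right h]; rw [abs_sub_comm]
    · simp only [min_eq_right h, max_eq_left h]
  · intro i hi
    have h2 := hE.1 i (Finset.mem_range.2 hi)
    rw [uIcc_of_le hab] at h2
    refine ⟨⟨le_min h2.1.1 h2.2.1, (min_le_left _ _).trans h2.1.2⟩,
      ⟨h2.1.1.trans (le_max_left _ _), max_le h2.1.2 h2.2.2⟩, min_le_max⟩
  · intro i hi j hj hij
    have h2 := hE.2 (by simpa using hi) (by simpa using hj) hij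
    have h3 := Set.disjoint_iff_inter_eq_empty.1 h2
    refine Set.subset_empty_iff.1 ?_
    rw [← h3]
    exact inter_subset_inter Ioo_subset_Ioc_self Ioo_subset_Ioc_self
  · refine lt_of_le_of_lt (le_of_eq ?_) hlt
    refine Finset.sum_congr rfl fun i _ => ?_
    rw [Real.dist_eq, max_sub_min_eq_abs']

lemma prim_f {I : Set ℝ} (hI : I.OrdConnected) {f f' : ℝ → ℝ}
    (hf : LocallyAbsolutelyContinuousOn f I) (hf' : IsDerivWithinOf f' f I) {a b : ℝ}
    (ha : a ∈ I) (hb : b ∈ I) (hab : a ≤ b) : Prim f f' a b := by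
  have hac := ac_convert hab (hf a ha b hb)
  have hd : ∀ᵐ x, x ∈ uIcc a b → HasDerivAt f (f' x) x := by
    filter_upwards [hac.ae_differentiableAt, ae_ne a, ae_ne b] with x hx h1 h2 hxx
    have hdx := hx hxx
    rw [uIcc_of_le hab] at hxx
    have hn : I ∈ 𝓝 x := Filter.mem_of_superset
      (Icc_mem_nhds (lt_of_le_of_ne hxx.1 (Ne.symm h1)) (lt_of_le_of_ne hxx.2 h2)) (hI.out ha hb)
    exact ((hf' x (hI.out ha hb hxx)).1 hdx.differentiableWithinAt).hasDerivAt hn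
  refine ⟨hac, ?_, hd⟩
  refine hac.boundedVariationOn.intervalIntegrable_deriv.congr_ae ?_
  rw [Filter.EventuallyEq, ae_restrict_iff' measurableSet_uIoc]
  filter_upwards [hd] with x hx hxx
  exact (hx (uIoc_subset_uIcc hxx)).deriv

lemma exists_g {G0 : ℝ → F} {J : Set ℝ} (h : LocEssBdd G0 J) {c d : ℝ} (hc : c ∈ J) (hd : d ∈ J)
    (hcd : c ≤ d) (hJ : Icc c d ⊆ J) :
    ∃ (g : ℝ → F) (M : ℝ), StronglyMeasurable g ∧ (∀ u, ‖g u‖ ≤ M) ∧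
      (∀ u, u ∉ Icc c d → g u = 0) ∧ ∀ᵐ u, u ∈ Icc c d → g u = G0 u := by
  obtain ⟨h1, h2⟩ := h
  obtain ⟨M, hM⟩ := h2 c hc d hd
  rw [uIcc_of_le hcd, ae_restrict_iff' measurableSet_Icc] at hM
  have h1' := h1.mono_measure (Measure.restrict_mono hJ le_rfl)
  have hsm := h1'.stronglyMeasurable_mk
  have hS : MeasurableSet (Icc c d ∩ {u | ‖h1'.mk G0 u‖ ≤ max M 0}) :=
    measurableSet_Icc.inter (hsm.norm.measurable measurableSet_Iic)
  refine ⟨(Icc c d ∩ {u | ‖h1'.mk G0 u‖ ≤ max M 0}).indicator (h1'.mk G0), max M 0,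
    hsm.indicator hS, ?_, ?_, ?_⟩
  · intro u
    by_cases hu : u ∈ Icc c d ∩ {u | ‖h1'.mk G0 u‖ ≤ max M 0}
    · rw [indicator_of_mem hu]; exact hu.2
    · rw [indicator_of_notMem hu, norm_zero]; exact le_max_right _ _
  · intro u hu
    exact indicator_of_notMem (fun h => hu h.1) _
  · have h3 := h1'.ae_eq_mk
    rw [Filter.EventuallyEq, ae_restrict_iff' measurableSet_Icc] at h3
    filter_upwards [h3, hM] with u e1 e2 hu
    rw [indicator_of_mem, e1 hu]
    refine ⟨hu, ?_⟩
    show ‖h1'.mk G0 u‖ ≤ max M 0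
    rw [← e1 hu]; exact (e2 hu).trans (le_max_left _ _)

lemma int_le_J {φ ψ : ℝ → ℝ} {J : Set ℝ} {c d : ℝ} (hcd : c ≤ d) (hJ : Icc c d ⊆ J)
    (hJm : MeasurableSet J)
    (h0 : ∀ u, 0 ≤ ψ u) (hψ : IntegrableOn ψ J) (h : ∀ᵐ u, u ∈ Icc c d → φ u = ψ u) :
    ∫ v in c..d, φ v ≤ ∫ v in J, ψ v := by
  rw [integral_of_le hcd]
  have : ∫ v in Ioc c d, φ v = ∫ v in Ioc c d, ψ v := by
    refine setIntegral_congr_ae measurableSet_Ioc ?_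
    filter_upwards [h] with u hu hu' using hu (Ioc_subset_Icc_self hu')
  rw [this]
  exact setIntegral_mono_set hψ (Filter.Eventually.of_forall h0)
    (HasSubset.Subset.eventuallyLE (Ioc_subset_Icc_self.trans hJ))

lemma setup {I J : Set ℝ} (hI : I.OrdConnected) (hJ : J.OrdConnected) {G : ℝ → ℝ → F}
    (hGm : ∀ t ∈ I, LocEssBdd (G t) J) {f f' : ℝ → ℝ} (hfJ : ∀ t ∈ I, f t ∈ J) {a b : ℝ}
    (ha : a ∈ I) (hb : b ∈ I) (hab : a ≤ b) (hf : Prim f f' a b) :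
    ∃ c d : ℝ, c ≤ d ∧ (∀ x ∈ Icc a b, f x ∈ Icc c d) ∧ Icc c d ⊆ J ∧
      ∃ (g : ℝ → ℝ → F) (M : ℝ → ℝ), ∀ τ ∈ Icc a b, StronglyMeasurable (g τ) ∧
        (∀ u, ‖g τ u‖ ≤ M τ) ∧ (∀ u, u ∉ Icc c d → g τ u = 0) ∧
        (∀ᵐ u, u ∈ Icc c d → g τ u = G τ u) ∧
        (∀ᵐ x, x ∈ Icc a b → f' x • g τ (f x) = f' x • G τ (f x)) := by
  have hsub : Icc a b ⊆ I := hI.out ha hb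
  have hcont : ContinuousOn f (Icc a b) := by
    have := hf.1.continuousOn; rwa [uIcc_of_le hab] at this
  obtain ⟨x1, hx1, hmin⟩ := isCompact_Icc.exists_isMinOn (nonempty_Icc.2 hab) hcont
  obtain ⟨x2, hx2, hmax⟩ := isCompact_Icc.exists_isMaxOn (nonempty_Icc.2 hab) hcont
  have hcd : f x1 ≤ f x2 := hmin hx2
  have hcdJ : Icc (f x1) (f x2) ⊆ J := hJ.out (hfJ _ (hsub hx1)) (hfJ _ (hsub hx2))
  have hfc : ∀ x ∈ Icc a b, f x ∈ Icc (f x1) (f x2) := fun x hx => ⟨hmin hx, hmax hx⟩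
  refine ⟨f x1, f x2, hcd, hfc, hcdJ, ?_⟩
  have : ∀ τ, ∃ (g : ℝ → F) (M : ℝ), τ ∈ Icc a b → (StronglyMeasurable g ∧ (∀ u, ‖g u‖ ≤ M) ∧
      (∀ u, u ∉ Icc (f x1) (f x2) → g u = 0) ∧
      ∀ᵐ u, u ∈ Icc (f x1) (f x2) → g u = G τ u) := by
    intro τ
    by_cases hτ : τ ∈ Icc a b
    · obtain ⟨g, M, h⟩ := exists_g (hGm τ (hsub hτ)) (hfJ _ (hsub hx1)) (hfJ _ (hsub hx2)) hcd hcdJ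
      exact ⟨g, M, fun _ => h⟩
    · exact ⟨0, 0, fun h => absurd h hτ⟩
  choose g M H using this
  refine ⟨g, M, fun τ hτ => ⟨(H τ hτ).1, (H τ hτ).2.1, (H τ hτ).2.2.1, (H τ hτ).2.2.2, ?_⟩⟩
  have h4 := null_lemma f (B := {u | ¬ (u ∈ Icc (f x1) (f x2) → g τ u = G τ u)}) (H τ hτ).2.2.2
  filter_upwards [h4, hf.2.2] with x h5 h6 hx
  by_cases h7 : f x ∈ {u | ¬ (u ∈ Icc (f x1) (f x2) → g τ u = G τ u)}
  · rw [h5 h7 _ (h6 (by rwa [uIcc_of_le hab])), zero_smul, zero_smul]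
  · rw [not_not.1 h7 (hfc x hx)]

lemma unif {I J : Set ℝ} (hI : I.OrdConnected) {G : ℝ → ℝ → F}
    (hGcont : ∀ t ∈ I, ∀ ε > (0 : ℝ), ∃ δ > (0 : ℝ), ∀ s ∈ I, |s - t| < δ →
      ∀ u ∈ J, ‖G s u - G t u‖ < ε) {a b : ℝ} (ha : a ∈ I) (hb : b ∈ I) {ε : ℝ} (hε : 0 < ε) :
    ∃ δ > 0, ∀ x ∈ Icc a b, ∀ y ∈ Icc a b, |y - x| < δ → ∀ u ∈ J, ‖G y u - G x u‖ ≤ ε := by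
  have hsub : Icc a b ⊆ I := hI.out ha hb
  choose! D hD H using fun t (ht : t ∈ I) => hGcont t ht (ε / 2) (by positivity)
  obtain ⟨δ, hδ, h⟩ := lebesgue_number_lemma_of_metric (s := Icc a b)
    (c := fun t : Icc a b => Metric.ball (t : ℝ) (D t)) isCompact_Icc
    (fun _ => Metric.isOpen_ball)
    (fun x hx => mem_iUnion.2 ⟨⟨x, hx⟩, Metric.mem_ball_self (hD x (hsub hx))⟩)
  refine ⟨δ, hδ, fun x hx y hy hxy u hu => ?_⟩
  obtain ⟨⟨t, ht⟩, hts⟩ := h x hx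
  have h1 := hts (Metric.mem_ball_self hδ)
  have h2 := hts (show y ∈ Metric.ball x δ by rwa [Metric.mem_ball, Real.dist_eq])
  rw [Metric.mem_ball, Real.dist_eq] at h1 h2
  have e1 := H t (hsub ht) x (hsub hx) h1 u hu
  have e2 := H t (hsub ht) y (hsub hy) h2 u hu
  have : G y u - G x u = (G y u - G t u) - (G x u - G t u) := by abel
  rw [this]
  exact (norm_sub_le _ _).trans (by linarith)

lemma A_meas {I J : Set ℝ} (hI : I.OrdConnected) (hJ : J.OrdConnected) {G : ℝ → ℝ → F}
    (hGm : ∀ t ∈ I, LocEssBdd (G t) J)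
    (hGcont : ∀ t ∈ I, ∀ ε > (0 : ℝ), ∃ δ > (0 : ℝ), ∀ s ∈ I, |s - t| < δ →
      ∀ u ∈ J, ‖G s u - G t u‖ < ε)
    {f f' : ℝ → ℝ} (hfJ : ∀ t ∈ I, f t ∈ J) {a b : ℝ}
    (ha : a ∈ I) (hb : b ∈ I) (hab : a ≤ b) (hf : Prim f f' a b) :
    AEStronglyMeasurable (fun x => f' x • G x (f x)) (volume.restrict (Ioc a b)) := by
  obtain ⟨c, d, hcd, hfc, hcdJ, g, M, H⟩ := setup hI hJ hGm hfJ ha hb hab hf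
  have hsub : Icc a b ⊆ I := hI.out ha hb
  have hcont : ContinuousOn f (Icc a b) := by
    have := hf.1.continuousOn; rwa [uIcc_of_le hab] at this
  let q : ℕ → ℝ → ℝ := fun n x => max a ((⌊((n : ℝ) + 1) * x⌋ : ℝ) / ((n : ℝ) + 1))
  have hq1 : ∀ n x, a ≤ x → q n x ∈ Icc a x := by
    intro n x hx
    have hn : (0 : ℝ) < n + 1 := by positivity
    refine ⟨le_max_left _ _, max_le hx ?_⟩
    rw [div_le_iff₀ hn, mul_comm x]
    exact Int.floor_le _
  have hq2 : ∀ n x, a ≤ x → |q n x - x| < 1 / ((n : ℝ) + 1) := by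
    intro n x hx
    have hn : (0 : ℝ) < n + 1 := by positivity
    rw [abs_sub_comm, abs_of_nonneg (by linarith [(hq1 n x hx).2])]
    have h1 : (⌊((n : ℝ) + 1) * x⌋ : ℝ) / ((n : ℝ) + 1) ≤ q n x := le_max_right _ _
    have h2 := Int.lt_floor_add_one (((n : ℝ) + 1) * x)
    have h3 : x < (⌊((n : ℝ) + 1) * x⌋ : ℝ) / ((n : ℝ) + 1) + 1 / ((n : ℝ) + 1) := by
      rw [← add_div, lt_div_iff₀ hn]; linarith
    linarith
  refine aestronglyMeasurable_of_tendsto_ae atTop (f := fun n x => f' x • G (q n x) (f x)) ?_ ?_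
  · intro n
    have hU : (⋃ k : ℤ, {x : ℝ | ⌊((n : ℝ) + 1) * x⌋ = k}) = univ := by
      ext x; simp
    rw [← Measure.restrict_univ (μ := volume.restrict (Ioc a b)), ← hU,
      aestronglyMeasurable_iUnion_iff]
    intro k
    have hTm : MeasurableSet {x : ℝ | ⌊((n : ℝ) + 1) * x⌋ = k} :=
      (Int.measurable_floor.comp (measurable_const.mul measurable_id)) (measurableSet_singleton k)
    by_cases hk : max a ((k : ℝ) / ((n : ℝ) + 1)) ∈ Icc a b
    · obtain ⟨s1, s2, s3, s4, s5⟩ := H _ hk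
      have h1 := ((smul_comp_integrable hab hcont hf.2.1 s1 s2).aestronglyMeasurable).restrict
        (s := {x : ℝ | ⌊((n : ℝ) + 1) * x⌋ = k})
      refine h1.congr ?_
      rw [Filter.EventuallyEq, ae_restrict_iff' hTm]
      refine ae_restrict_of_ae_restrict_of_subset Ioc_subset_Icc_self ?_
      rw [ae_restrict_iff' measurableSet_Icc]
      filter_upwards [s5] with x hx hxx hxk
      have : q n x = max a ((k : ℝ) / ((n : ℝ) + 1)) := by
        have hxk' : ⌊((n : ℝ) + 1) * x⌋ = k := hxk
        simp only [q, hxk']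
      rw [this]
      exact hx hxx
    · refine (aestronglyMeasurable_const (b := (0 : F))).congr ?_
      rw [Filter.EventuallyEq, ae_restrict_iff' hTm, ae_restrict_iff' measurableSet_Ioc]
      refine Filter.Eventually.of_forall fun x hx hxk => absurd ?_ hk
      have : q n x = max a ((k : ℝ) / ((n : ℝ) + 1)) := by
        have hxk' : ⌊((n : ℝ) + 1) * x⌋ = k := hxk
        simp only [q, hxk']
      rw [← this]
      have := hq1 n x hx.1.le
      exact ⟨this.1, this.2.trans hx.2⟩
  · rw [ae_restrict_iff' measurableSet_Ioc]
    refine Filter.Eventually.of_forall fun x hx => ?_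
    have hxI : x ∈ I := hsub (Ioc_subset_Icc_self hx)
    refine Tendsto.const_smul ?_ _
    rw [Metric.tendsto_atTop]
    intro ε hε
    obtain ⟨δ, hδ, h⟩ := hGcont x hxI ε hε
    obtain ⟨n0, hn0⟩ := exists_nat_one_div_lt hδ
    refine ⟨n0, fun n hn => ?_⟩
    rw [dist_eq_norm]
    have h2 := hq1 n x hx.1.le
    refine h _ (hsub ⟨h2.1, h2.2.trans hx.2⟩) ((hq2 n x hx.1.le).trans_le ?_) _ (hfJ x hxI)
    refine le_trans ?_ hn0.le
    have : (n0 : ℝ) ≤ n := by exact_mod_cast hn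
    gcongr

lemma exists_part {s t δ : ℝ} (hst : s < t) (hδ : 0 < δ) : ∃ (n : ℕ) (a : ℕ → ℝ),
    a 0 = s ∧ a n = t ∧ (∀ i, a i < a (i + 1)) ∧ (∀ i, a (i + 1) - a i < δ) ∧
    (∀ i ≤ n, a i ∈ Icc s t) := by
  obtain ⟨n, hn⟩ := exists_nat_gt ((t - s) / δ)
  have hn0 : (0 : ℝ) < n := lt_trans (div_pos (by linarith) hδ) hn
  have hst' : 0 < t - s := by linarith
  refine ⟨n, fun i => s + i * ((t - s) / n), by simp, by field_simp; ring, ?_, ?_, ?_⟩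
  · intro i
    have : 0 < (t - s) / n := by positivity
    push_cast
    linarith
  · intro i
    rw [div_lt_iff₀ hδ] at hn
    have : (t - s) / n < δ := by rw [div_lt_iff₀ hn0]; linarith
    push_cast
    linarith
  · intro i hi
    have h1 : (i : ℝ) ≤ n := by exact_mod_cast hi
    have h2 : 0 ≤ (t - s) / n := by positivity
    have h3 : (n : ℝ) * ((t - s) / n) = t - s := by field_simp
    constructor
    · have : 0 ≤ (i : ℝ) * ((t - s) / n) := by positivity
      linarith
    · have : (i : ℝ) * ((t - s) / n) ≤ n * ((t - s) / n) := by gcongr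
      linarith

lemma A_int {I J : Set ℝ} (hI : I.OrdConnected) (hJ : J.OrdConnected) {G : ℝ → ℝ → F}
    (hGm : ∀ t ∈ I, LocEssBdd (G t) J)
    (hGcont : ∀ t ∈ I, ∀ ε > (0 : ℝ), ∃ δ > (0 : ℝ), ∀ s ∈ I, |s - t| < δ →
      ∀ u ∈ J, ‖G s u - G t u‖ < ε)
    {f f' : ℝ → ℝ} (hfJ : ∀ t ∈ I, f t ∈ J) {a b : ℝ}
    (ha : a ∈ I) (hb : b ∈ I) (hab : a < b) (hf : Prim f f' a b) :
    IntervalIntegrable (fun x => f' x • G x (f x)) volume a b := by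
  have hmeas := A_meas hI hJ hGm hGcont hfJ ha hb hab.le hf
  obtain ⟨c, d, hcd, hfc, hcdJ, g, M, H⟩ := setup hI hJ hGm hfJ ha hb hab.le hf
  have hsub : Icc a b ⊆ I := hI.out ha hb
  obtain ⟨δ, hδ, hu⟩ := unif hI hGcont ha hb one_pos
  obtain ⟨n, p, p0, pn, pm, pd, pI⟩ := exists_part hab hδ
  rw [← p0, ← pn]
  refine IntervalIntegrable.trans_iterate fun k hk => ?_
  have hk1 := pI k hk.le
  have hk2 := pI (k + 1) hk
  have hsubk : Icc (p k) (p (k + 1)) ⊆ Icc a b := Icc_subset_Icc hk1.1 hk2.2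
  have hsubk' : uIcc (p k) (p (k + 1)) ⊆ uIcc a b := by
    rwa [uIcc_of_le (pm k).le, uIcc_of_le hab.le]
  have hfk := hf.mono hsubk'
  obtain ⟨s1, s2, s3, s4, s5⟩ := H _ hk1
  have hM0 : 0 ≤ M (p k) := (norm_nonneg _).trans (s2 0)
  refine (hfk.2.1.norm.const_mul (M (p k) + 1)).mono_fun ?_ ?_
  · rw [uIoc_of_le (pm k).le]
    exact hmeas.mono_measure (Measure.restrict_mono (Ioc_subset_Ioc hk1.1 hk2.2) le_rfl)
  · rw [uIoc_of_le (pm k).le, Filter.EventuallyLE, ae_restrict_iff' measurableSet_Ioc]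
    filter_upwards [s5] with x hx hxx
    have hxx' : x ∈ Icc a b := hsubk (Ioc_subset_Icc_self hxx)
    have hx := hx hxx'
    have h1 := hu _ hk1 x hxx' (by
      rw [abs_of_nonneg (by linarith [hxx.1])]; linarith [hxx.2, pd k]) (f x) (hfJ x (hsub hxx'))
    have e : f' x • G x (f x) = f' x • (G x (f x) - G (p k) (f x)) + f' x • g (p k) (f x) := by
      rw [hx, smul_sub]; abel
    rw [e, norm_mul, norm_norm, Real.norm_of_nonneg (show 0 ≤ M (p k) + 1 by linarith)]
    refine (norm_add_le _ _).trans ?_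
    rw [norm_smul, norm_smul]
    have := s2 (f x)
    nlinarith [norm_nonneg (f' x)]

lemma seq_bound {z r : ℕ → ℝ} {n : ℕ} (h : ∀ i < n, z (i + 1) ≤ z i * Real.exp (r i)) :
    z n ≤ z 0 * Real.exp (∑ i ∈ Finset.range n, r i) := by
  induction n with
  | zero => simp
  | succ n ih =>
    have h1 := ih (fun i hi => h i (by omega))
    rw [Finset.sum_range_succ, Real.exp_add, ← mul_assoc]
    exact (h n (by omega)).trans (by gcongr)

lemma seq_bound_rev {z r : ℕ → ℝ} {n : ℕ} (h : ∀ i < n, z i ≤ z (i + 1) * Real.exp (r i)) :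
    z 0 ≤ z n * Real.exp (∑ i ∈ Finset.range n, r i) := by
  induction n with
  | zero => simp
  | succ n ih =>
    have h1 := ih (fun i hi => h i (by omega))
    rw [Finset.sum_range_succ, Real.exp_add]
    calc z 0 ≤ z n * Real.exp (∑ i ∈ Finset.range n, r i) := h1
      _ ≤ (z (n + 1) * Real.exp (r n)) * Real.exp (∑ i ∈ Finset.range n, r i) := by
          gcongr
          exact h n (by omega)
      _ = _ := by ring

lemma core_eps {R : Type*} [NormedRing R] [NormedAlgebra ℝ R] [CompleteSpace R]
    (h1 : ‖(1 : R)‖ ≤ 1) {I J : Set ℝ} (hI : I.OrdConnected) (hJ : J.OrdConnected)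
    {G : ℝ → ℝ → R}
    (hGm : ∀ t ∈ I, LocEssBdd (G t) J) (hGi : ∀ t ∈ I, IntegrableOn (G t) J)
    (hGcont : ∀ t ∈ I, ∀ ε > (0 : ℝ), ∃ δ > (0 : ℝ), ∀ s ∈ I, |s - t| < δ →
      ∀ u ∈ J, ‖G s u - G t u‖ < ε)
    {V N : ℝ} (hV : ∀ v ∈ l1VarSums G I J, v ≤ V)
    (hN : ∀ t ∈ I, Real.exp (∫ u in J, ‖G t u‖) ≤ N)
    {f f' : ℝ → ℝ} (hfJ : ∀ t ∈ I, f t ∈ J) {s t : ℝ}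
    (hs : s ∈ I) (ht : t ∈ I) (hst : s < t) (hf : Prim f f' s t) {X : ℝ → R}
    (hX : Prim X (fun x => (f' x • G x (f x)) * X x) s t) {ε : ℝ} (hε : 0 < ε) :
    ‖X t‖ ≤ N ^ 2 * Real.exp (N ^ 2 * V + N ^ 2 * ε * ∫ x in s..t, |f' x|) * ‖X s‖ ∧
    ‖X s‖ ≤ N ^ 2 * Real.exp (N ^ 2 * V + N ^ 2 * ε * ∫ x in s..t, |f' x|) * ‖X t‖ := by
  obtain ⟨c, d, hcd, hfc, hcdJ, g, M, H⟩ := setup hI hJ hGm hfJ hs ht hst.le hf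
  have hsub : Icc s t ⊆ I := hI.out hs ht
  have hJm : MeasurableSet J := hJ.measurableSet
  have hN0 : 0 ≤ N := (Real.exp_pos _).le.trans (hN s hs)
  obtain ⟨δ, hδ, hu⟩ := unif hI hGcont hs ht hε
  obtain ⟨n, p, p0, pn, pm, pd, pI⟩ := exists_part hst hδ
  have hFund : ∀ τ, ∃ Y W : ℝ → R, τ ∈ Icc s t → Fund (g τ) Y W c d := by
    intro τ
    by_cases hτ : τ ∈ Icc s t
    · obtain ⟨Y, W, h⟩ := exists_fund hcd (H τ hτ).1 (H τ hτ).2.1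
      exact ⟨Y, W, fun _ => h⟩
    · exact ⟨0, 0, fun h => absurd h hτ⟩
  choose Y W hYW using hFund
  have hNg : ∀ τ ∈ Icc s t, Real.exp (∫ v in c..d, ‖g τ v‖) ≤ N := by
    intro τ hτ
    refine le_trans (Real.exp_le_exp.2 ?_) (hN τ (hsub hτ))
    refine int_le_J hcd hcdJ hJm (fun _ => norm_nonneg _) (hGi τ (hsub hτ)).norm ?_
    filter_upwards [(H τ hτ).2.2.2.1] with u hu hu' using by rw [hu hu']
  have hD : ∀ τ ∈ Icc s t, ∀ σ ∈ Icc s t, ∫ v in c..d, ‖g τ v - g σ v‖ ≤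
      ∫ v in J, ‖G τ v - G σ v‖ := by
    intro τ hτ σ hσ
    refine int_le_J hcd hcdJ hJm (fun _ => norm_nonneg _)
      ((hGi τ (hsub hτ)).sub (hGi σ (hsub hσ))).norm ?_
    filter_upwards [(H τ hτ).2.2.2.1, (H σ hσ).2.2.2.1] with u hu hu2 hu'
    rw [hu hu', hu2 hu']
  have htrans : ∀ τ ∈ Icc s t, ∀ σ ∈ Icc s t, ∀ x ∈ Icc s t,
      ‖W σ (f x) * X x‖ ≤ ‖W τ (f x) * X x‖ *
        Real.exp (N ^ 2 * ∫ v in J, ‖G τ v - G σ v‖) := by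
    intro τ hτ σ hσ x hx
    have hfx := hfc x hx
    have e : W σ (f x) * X x = (W σ (f x) * Y τ (f x)) * (W τ (f x) * X x) := by
      rw [mul_assoc, ← mul_assoc (Y τ (f x)), (hYW τ hτ).YW (H τ hτ).1 (H τ hτ).2.1 hfx, one_mul]
    have b1 := (hYW σ hσ).trans_bound (hYW τ hτ) h1 (H σ hσ).1 (H σ hσ).2.1 (H τ hτ).1 (H τ hτ).2.1
      (hNg σ hσ) (hNg τ hτ) hfx
    have b2 : N ^ 2 * ∫ v in c..d, ‖g τ v - g σ v‖ ≤ N ^ 2 * ∫ v in J, ‖G τ v - G σ v‖ := by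
      gcongr
      exact hD τ hτ σ hσ
    have b3 := Real.add_one_le_exp (N ^ 2 * ∫ v in J, ‖G τ v - G σ v‖)
    rw [e, mul_comm ‖W τ (f x) * X x‖]
    refine (norm_mul_le _ _).trans ?_
    gcongr
    linarith
  let r : ℕ → ℝ := fun i => N ^ 2 * (∫ v in J, ‖G (p (i + 1)) v - G (p i) v‖) +
    N ^ 2 * ε * ∫ x in p i..p (i + 1), |f' x|
  let z : ℕ → ℝ := fun i => ‖W (p i) (f (p i)) * X (p i)‖
  have hpiece : ∀ i < n,
      ‖W (p i) (f (p (i + 1))) * X (p (i + 1))‖ ≤ ‖W (p i) (f (p i)) * X (p i)‖ *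
        Real.exp (N ^ 2 * ε * ∫ x in p i..p (i + 1), |f' x|) ∧
      ‖W (p i) (f (p i)) * X (p i)‖ ≤ ‖W (p i) (f (p (i + 1))) * X (p (i + 1))‖ *
        Real.exp (N ^ 2 * ε * ∫ x in p i..p (i + 1), |f' x|) := by
    intro i hi
    have hk1 := pI i hi.le
    have hk2 := pI (i + 1) hi
    have hsubk : Icc (p i) (p (i + 1)) ⊆ Icc s t := Icc_subset_Icc hk1.1 hk2.2
    have hsubk' : uIcc (p i) (p (i + 1)) ⊆ uIcc s t := by
      rwa [uIcc_of_le (pm i).le, uIcc_of_le hst.le]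
    obtain ⟨s1, s2, s3, s4, s5⟩ := H _ hk1
    refine piece_bound (A := fun x => f' x • G x (f x)) (hYW _ hk1) h1 s1 s2 s3 (hNg _ hk1)
      (pm i).le (hf.mono hsubk') (fun x hx => hfc x (hsubk hx)) (hX.mono hsubk') hε.le ?_
    filter_upwards [s5] with x hx hxx
    rw [hx (hsubk hxx), ← smul_sub, norm_smul, Real.norm_eq_abs, mul_comm]
    gcongr
    refine hu _ hk1 x (hsubk hxx) ?_ _ (hfJ x (hsub (hsubk hxx)))
    rw [abs_of_nonneg (by linarith [hxx.1])]; linarith [hxx.2, pd i]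
  have hz1 : ∀ i < n, z (i + 1) ≤ z i * Real.exp (r i) := by
    intro i hi
    have b1 := htrans _ (pI i hi.le) _ (pI (i + 1) hi) _ (pI (i + 1) hi)
    have b2 := (hpiece i hi).1
    have e : ∫ v in J, ‖G (p i) v - G (p (i + 1)) v‖ = ∫ v in J, ‖G (p (i + 1)) v - G (p i) v‖ := by
      simp_rw [norm_sub_rev]
    rw [e] at b1
    simp only [z, r, Real.exp_add]
    refine b1.trans ?_
    calc _ ≤ _ := mul_le_mul_of_nonneg_right b2 (Real.exp_pos _).le
      _ = _ := by ring
  have hz2 : ∀ i < n, z i ≤ z (i + 1) * Real.exp (r i) := by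
    intro i hi
    have b1 := htrans _ (pI (i + 1) hi) _ (pI i hi.le) _ (pI (i + 1) hi)
    have b2 := (hpiece i hi).2
    simp only [z, r, Real.exp_add]
    refine b2.trans ?_
    calc _ ≤ _ := mul_le_mul_of_nonneg_right b1 (Real.exp_pos _).le
      _ = _ := by ring
  have hr : ∑ i ∈ Finset.range n, r i ≤ N ^ 2 * V + N ^ 2 * ε * ∫ x in s..t, |f' x| := by
    simp only [r]
    rw [Finset.sum_add_distrib, ← Finset.mul_sum, ← Finset.mul_sum,
      sum_integral_adjacent_intervals, p0, pn]
    · gcongr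
      exact hV _ ⟨n, p, fun i hi => hsub (pI i hi), fun i _ => pm i, rfl⟩
    · intro k hk
      refine (hf.2.1.abs).mono_set ?_
      rw [uIcc_of_le (pm k).le, uIcc_of_le hst.le]
      exact Icc_subset_Icc (pI k hk.le).1 (pI (k + 1) hk).2
  have hW1 : ∀ i ≤ n, z i ≤ N * ‖X (p i)‖ := by
    intro i hi
    refine (norm_mul_le _ _).trans ?_
    gcongr
    exact ((hYW _ (pI i hi)).normW h1 (H _ (pI i hi)).1 (H _ (pI i hi)).2.1
      (hfc _ (pI i hi))).trans (hNg _ (pI i hi))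
  have hY1 : ∀ i ≤ n, ‖X (p i)‖ ≤ N * z i := by
    intro i hi
    have e : X (p i) = Y (p i) (f (p i)) * (W (p i) (f (p i)) * X (p i)) := by
      rw [← mul_assoc, (hYW _ (pI i hi)).YW (H _ (pI i hi)).1 (H _ (pI i hi)).2.1
        (hfc _ (pI i hi)), one_mul]
    refine (le_of_eq (congrArg norm e)).trans ((norm_mul_le _ _).trans ?_)
    simp only [z]
    gcongr
    exact ((hYW _ (pI i hi)).normY h1 (H _ (pI i hi)).1 (H _ (pI i hi)).2.1
      (hfc _ (pI i hi))).trans (hNg _ (pI i hi))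
  have hexp := Real.exp_le_exp.2 hr
  have hz0 : ∀ i, 0 ≤ z i := fun i => norm_nonneg _
  have w0 := hW1 0 (Nat.zero_le _)
  have wn := hW1 n le_rfl
  have y0 := hY1 0 (Nat.zero_le _)
  have yn := hY1 n le_rfl
  rw [p0] at w0 y0
  rw [pn] at wn yn
  constructor
  · calc ‖X t‖ ≤ N * z n := yn
      _ ≤ N * (z 0 * Real.exp (∑ i ∈ Finset.range n, r i)) := by gcongr; exact seq_bound hz1
      _ ≤ N * ((N * ‖X s‖) * Real.exp (N ^ 2 * V + N ^ 2 * ε * ∫ x in s..t, |f' x|)) := by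
          gcongr
      _ = _ := by ring
  · calc ‖X s‖ ≤ N * z 0 := y0
      _ ≤ N * (z n * Real.exp (∑ i ∈ Finset.range n, r i)) := by gcongr; exact seq_bound_rev hz2
      _ ≤ N * ((N * ‖X t‖) * Real.exp (N ^ 2 * V + N ^ 2 * ε * ∫ x in s..t, |f' x|)) := by
          gcongr
      _ = _ := by ring

lemma lim_eps {x C N V L : ℝ}
    (h : ∀ ε > 0, x ≤ N ^ 2 * Real.exp (N ^ 2 * V + N ^ 2 * ε * L) * C) :
    x ≤ N ^ 2 * Real.exp (N ^ 2 * V) * C := by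
  have hc : Continuous fun ε : ℝ => N ^ 2 * Real.exp (N ^ 2 * V + N ^ 2 * ε * L) * C := by fun_prop
  have h1 : Tendsto (fun ε : ℝ => N ^ 2 * Real.exp (N ^ 2 * V + N ^ 2 * ε * L) * C) (𝓝[>] 0)
      (𝓝 (N ^ 2 * Real.exp (N ^ 2 * V) * C)) := by
    have := (hc.tendsto 0).mono_left (nhdsWithin_le_nhds (s := Ioi 0))
    simpa using this
  refine ge_of_tendsto h1 ?_
  filter_upwards [self_mem_nhdsWithin] with ε hε using h ε hε

end Helpers

/-- main theorem. If `G : I → L^∞_loc(J;End E) ∩ L¹(J;End E)` is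
continuous for the supremum distance and of bounded variation `V` in `L¹(J;End E)`, then
for every `f ∈ AC_loc(I)` with `f(I) ⊆ J` the system `A(t) = f'(t)·G(t)(f(t))` is locally
integrable and any evolution operator satisfies `‖X(t,s)^{±1}‖ ≤ N² exp(N^{3+2N} V)`. -/
theorem stmt10 {E : Type*} [NormedAddCommGroup E] [NormedSpace ℝ E] [CompleteSpace E]
    (I J : Set ℝ) (hI : I.OrdConnected) (hJ : J.OrdConnected)
    (G : ℝ → ℝ → E →L[ℝ] E)
    (hGm : ∀ t ∈ I, LocEssBdd (G t) J)
    (hGi : ∀ t ∈ I, IntegrableOn (G t) J)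
    (hGcont : ∀ t ∈ I, ∀ ε > (0 : ℝ), ∃ δ > (0 : ℝ), ∀ s ∈ I, |s - t| < δ →
      ∀ u ∈ J, ‖G s u - G t u‖ < ε)
    (hBV : BddAbove (l1VarSums G I J))
    (V N : ℝ)
    (hV : V = sSup (l1VarSums G I J))
    (hN : N = Real.exp (⨆ t ∈ I, ∫ u in J, ‖G t u‖))
    (f f' : ℝ → ℝ)
    (hf : LocallyAbsolutelyContinuousOn f I)
    (hf' : IsDerivWithinOf f' f I)
    (hfJ : ∀ t ∈ I, f t ∈ J)
    (A : ℝ → E →L[ℝ] E)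
    (hA : ∀ t ∈ I, A t = f' t • G t (f t)) :
    (∀ a ∈ I, ∀ b ∈ I, IntervalIntegrable A volume a b) ∧
    ∀ X, IsEvolutionOperator I A X →
      ∀ s ∈ I, ∀ t ∈ I, s ≤ t →
        ‖X t s‖ ≤ N ^ 2 * Real.exp (N ^ (3 + 2 * N) * V) ∧
        ‖X s t‖ ≤ N ^ 2 * Real.exp (N ^ (3 + 2 * N) * V) := by
  have hPf : ∀ a ∈ I, ∀ b ∈ I, a ≤ b → Prim f f' a b := fun a ha b hb hab =>
    prim_f hI hf hf' ha hb hab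
  have hlt : ∀ a ∈ I, ∀ b ∈ I, a < b → IntervalIntegrable A volume a b := by
    intro a ha b hb hab
    refine (A_int hI hJ hGm hGcont hfJ ha hb hab (hPf a ha b hb hab.le)).congr ?_
    intro x hx
    rw [uIoc_of_le hab.le] at hx
    exact (hA x (hI.out ha hb (Ioc_subset_Icc_self hx))).symm
  have hint : ∀ a ∈ I, ∀ b ∈ I, IntervalIntegrable A volume a b := by
    intro a ha b hb
    rcases lt_trichotomy a b with h | h | h
    · exact hlt a ha b hb h
    · rw [h]
    · exact (hlt b hb a ha h).symm
  refine ⟨hint, ?_⟩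
  intro X hX s hs t ht hst
  have hVle : ∀ v ∈ l1VarSums G I J, v ≤ V := fun v hv => hV ▸ le_csSup hBV hv
  have hV0 : 0 ≤ V := hVle 0 ⟨0, fun _ => s, fun _ _ => hs, fun i hi => absurd hi (by omega), by simp⟩
  have hpair : ∀ a ∈ I, ∀ b ∈ I, ∫ u in J, ‖G b u - G a u‖ ≤ V := by
    have key : ∀ a ∈ I, ∀ b ∈ I, a < b → ∫ u in J, ‖G b u - G a u‖ ≤ V := by
      intro a ha b hb hab
      refine hVle _ ⟨1, fun i => if i = 0 then a else b, ?_, ?_, ?_⟩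
      · intro i _
        dsimp only
        split_ifs
        · exact ha
        · exact hb
      · intro i hi
        have : i = 0 := by omega
        subst this
        simpa using hab
      · simp
    intro a ha b hb
    rcases lt_trichotomy a b with h | h | h
    · exact key a ha b hb h
    · rw [h]; simpa using hV0
    · have := key b hb a ha h
      simp_rw [norm_sub_rev (G b _)]
      exact this
  have hbdd : BddAbove (range fun τ => ⨆ (_ : τ ∈ I), ∫ u in J, ‖G τ u‖) := by
    refine ⟨(∫ u in J, ‖G s u‖) + V, ?_⟩
    rintro _ ⟨τ, rfl⟩
    have h0 : 0 ≤ ∫ u in J, ‖G s u‖ := MeasureTheory.integral_nonneg fun _ => norm_nonneg _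
    by_cases hτ : τ ∈ I
    · simp only [hτ, ciSup_pos]
      refine le_trans ?_ (add_le_add_right (hpair s hs τ hτ) _)
      have hsubi : Integrable (fun u => ‖G τ u - G s u‖) (volume.restrict J) :=
        ((hGi τ hτ).sub (hGi s hs)).norm
      rw [← MeasureTheory.integral_add (hGi s hs).norm hsubi]
      refine MeasureTheory.integral_mono (hGi τ hτ).norm
        ((hGi s hs).norm.add hsubi) ?_
      intro u
      have := norm_add_le (G s u) (G τ u - G s u)
      rw [add_sub_cancel] at this
      exact this
    · simp only [hτ, Real.iSup_of_isEmpty]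
      linarith
  have hNle : ∀ τ ∈ I, Real.exp (∫ u in J, ‖G τ u‖) ≤ N := by
    intro τ hτ
    rw [hN]
    refine Real.exp_le_exp.2 ?_
    refine le_ciSup_of_le hbdd τ ?_
    simp only [hτ, ciSup_pos]
    exact le_rfl
  have hN1 : 1 ≤ N := by
    refine le_trans ?_ (hNle s hs)
    rw [Real.one_le_exp_iff]
    exact MeasureTheory.integral_nonneg fun _ => norm_nonneg _
  have hone : ‖(1 : E →L[ℝ] E)‖ ≤ 1 := ContinuousLinearMap.norm_id_le
  have hfin : N ^ 2 * Real.exp (N ^ 2 * V) ≤ N ^ 2 * Real.exp (N ^ (3 + 2 * N) * V) := by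
    have : N ^ (2 : ℕ) ≤ N ^ (3 + 2 * N) := by
      rw [← Real.rpow_natCast]
      exact Real.rpow_le_rpow_of_exponent_le hN1 (by push_cast; linarith)
    gcongr
  have hsol : ∀ r ∈ I, s < t → Prim (fun τ => X τ r)
      (fun x => (f' x • G x (f x)) * X x r) s t := by
    intro r hr hlt'
    obtain ⟨hc, -, he⟩ := hX r hr
    have hsub : Icc s t ⊆ I := hI.out hs ht
    have hii : IntervalIntegrable (fun x => A x * X x r) volume s t :=
      (hint s hs t ht).mul_continuousOn (by rw [uIcc_of_le hst]; exact hc.mono hsub)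
    have hP : Prim (fun τ => X τ r) (fun x => A x * X x r) s t := by
      refine Prim.of_integral hst hii ?_
      intro x hx
      have := he s hs x (hsub hx)
      rw [sub_eq_iff_eq_add'] at this
      exact this
    refine ⟨hP.1, hii.congr ?_, ?_⟩
    · intro x hx
      rw [uIoc_of_le hst] at hx
      dsimp only
      rw [hA x (hsub (Ioc_subset_Icc_self hx))]
    · filter_upwards [hP.2.2] with x hx hxx
      have := hx hxx
      rw [uIcc_of_le hst] at hxx
      rwa [hA x (hsub hxx)] at this
  rcases hst.eq_or_lt with h | h
  · subst h
    rw [(hX s hs).2.1]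
    have h1 : (1 : ℝ) ≤ N ^ 2 * Real.exp (N ^ (3 + 2 * N) * V) := by
      have e1 : (1 : ℝ) ≤ N ^ 2 := one_le_pow₀ hN1
      have e2 : (1 : ℝ) ≤ Real.exp (N ^ (3 + 2 * N) * V) := by
        rw [Real.one_le_exp_iff]; positivity
      nlinarith
    exact ⟨ContinuousLinearMap.norm_id_le.trans h1, ContinuousLinearMap.norm_id_le.trans h1⟩
  · have hpos : 0 ≤ N ^ 2 * Real.exp (N ^ 2 * V) := by positivity
    constructor
    · have := lim_eps (C := ‖X s s‖) fun ε hε => (core_eps hone hI hJ hGm hGi hGcont hVle hNle hfJ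
        hs ht h (hPf s hs t ht hst) (hsol s hs h) hε).1
      rw [(hX s hs).2.1] at this
      refine le_trans ?_ hfin
      exact this.trans (mul_le_of_le_one_right hpos ContinuousLinearMap.norm_id_le)
    · have := lim_eps (C := ‖X t t‖) fun ε hε => (core_eps hone hI hJ hGm hGi hGcont hVle hNle hfJ
        hs ht h (hPf s hs t ht hst) (hsol t ht h) hε).2
      rw [(hX t ht).2.1] at this
      refine le_trans ?_ hfin
      exact this.trans (mul_le_of_le_one_right hpos ContinuousLinearMap.norm_id_le)
end

section
/- Let I ⊆ ℝ be an interval, E a Banach space, F = End(E), G̃ : I → F continuous and of bounded variation with respect to F, and f : I → ℝ locally absolutely continuous with f(I) bounded. Define A : I → F by A(t) = f'(t) G̃(t). Then A is bistable in E: there exists C > 0 such that for every evolution operator X for A in E and all s, t ∈ I, ‖X(t, s)‖ ≤ C. -/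
open MeasureTheory Set intervalIntegral

/-- The set of partition sums defining the total variation of `G : I → F`. -/
def varSums {F : Type*} [NormedAddCommGroup F] (G : ℝ → F) (I : Set ℝ) : Set ℝ :=
  {v | ∃ n : ℕ, ∃ a : ℕ → ℝ, (∀ i ≤ n, a i ∈ I) ∧ (∀ i < n, a i < a (i + 1)) ∧
    v = ∑ i ∈ Finset.range n, ‖G (a (i + 1)) - G (a i)‖}


theorem aux_pow_sub {𝔸 : Type*} [NormedRing 𝔸] (x y : 𝔸) (R : ℝ) (hx : ‖x‖ ≤ R) (hy : ‖y‖ ≤ R)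
    (n : ℕ) : ‖x ^ (n + 1) - y ^ (n + 1)‖ ≤ (n + 1) * R ^ n * ‖x - y‖ := by
  have hR : 0 ≤ R := (norm_nonneg x).trans hx
  induction n with
  | zero => simp
  | succ n ih =>
    have e : x ^ (n + 1 + 1) - y ^ (n + 1 + 1)
        = x * (x ^ (n + 1) - y ^ (n + 1)) + (x - y) * y ^ (n + 1) := by
      rw [pow_succ' x (n + 1), pow_succ' y (n + 1)]; noncomm_ring
    have h2 : ‖y ^ (n + 1)‖ ≤ R ^ (n + 1) :=
      (norm_pow_le' y (Nat.succ_pos n)).trans (pow_le_pow_left₀ (norm_nonneg _) hy _)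
    rw [e]
    calc _ ≤ ‖x‖ * ‖x ^ (n + 1) - y ^ (n + 1)‖ + ‖x - y‖ * ‖y ^ (n + 1)‖ :=
          (norm_add_le _ _).trans (add_le_add (norm_mul_le _ _) (norm_mul_le _ _))
      _ ≤ R * ((n + 1) * R ^ n * ‖x - y‖) + ‖x - y‖ * R ^ (n + 1) := by gcongr
      _ = _ := by push_cast; ring

theorem aux_exp_lip {𝔸 : Type*} [NormedRing 𝔸] [NormedAlgebra ℝ 𝔸] [CompleteSpace 𝔸]
    (x y : 𝔸) (R : ℝ) (hx : ‖x‖ ≤ R) (hy : ‖y‖ ≤ R) :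
    ‖NormedSpace.exp x - NormedSpace.exp y‖ ≤ Real.exp R * ‖x - y‖ := by
  have hR : 0 ≤ R := (norm_nonneg x).trans hx
  have h := (NormedSpace.exp_series_hasSum_exp' (𝕂 := ℝ) x).sub
    (NormedSpace.exp_series_hasSum_exp' (𝕂 := ℝ) y)
  have h1 := (hasSum_nat_add_iff' 1).2 h
  simp only [Finset.range_one, Finset.sum_singleton, pow_zero, sub_self, sub_zero] at h1
  have hb : HasSum (fun n : ℕ => ((n.factorial : ℝ)⁻¹ • R ^ n) * ‖x - y‖)
      (Real.exp R * ‖x - y‖) := by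
    rw [Real.exp_eq_exp_ℝ]
    exact (NormedSpace.exp_series_hasSum_exp' (𝕂 := ℝ) R).mul_right _
  refine h1.norm_le_of_bounded hb (fun n => ?_)
  rw [← smul_sub, norm_smul, Nat.factorial_succ]
  have hp := aux_pow_sub x y R hx hy n
  have hn : (0 : ℝ) < n.factorial := by positivity
  rw [Real.norm_of_nonneg (by positivity)]
  calc _ ≤ (((n + 1) * n.factorial : ℕ) : ℝ)⁻¹ * ((n + 1) * R ^ n * ‖x - y‖) := by gcongr
    _ = _ := by push_cast; simp only [smul_eq_mul]; field_simp

theorem aux_step {𝔸 : Type*} [NormedRing 𝔸] [NormedAlgebra ℝ 𝔸] [CompleteSpace 𝔸]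
    (h1 : ‖(1 : 𝔸)‖ ≤ 1) (M K N : ℝ) (hN : ∀ u : 𝔸, ‖u‖ ≤ M * K → ‖NormedSpace.exp u‖ ≤ N)
    (fa fb : ℝ) (Ga Gb Xa Xb : 𝔸) (hfa : |fa| ≤ M) (hfb : |fb| ≤ M) (hGa : ‖Ga‖ ≤ K)
    (hGb : ‖Gb‖ ≤ K) :
    ‖NormedSpace.exp (-(fb • Gb)) * Xb‖ ≤ (1 + N * Real.exp (M * K) * M * ‖Gb - Ga‖) *
      (‖NormedSpace.exp (-(fa • Ga)) * Xa‖ + N * (‖Xb - Xa - (fb - fa) • (Ga * Xa)‖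
        + ‖NormedSpace.exp ((fb - fa) • Ga) - 1 - (fb - fa) • Ga‖ * ‖Xa‖)) := by
  let _ : NormedAlgebra ℚ 𝔸 := NormedAlgebra.restrictScalars ℚ ℝ 𝔸
  have hM : 0 ≤ M := (abs_nonneg _).trans hfa
  have hsm : ∀ (c : ℝ) (G : 𝔸), |c| ≤ M → ‖G‖ ≤ K → ‖c • G‖ ≤ M * K := by
    intro c G hc hG
    rw [norm_smul, Real.norm_eq_abs]; gcongr
  have hN0 : 0 ≤ N := (norm_nonneg _).trans (hN _ (hsm fa Ga hfa hGa))
  have hinv : NormedSpace.exp (fb • Ga) * NormedSpace.exp (-(fb • Ga)) = 1 := by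
    rw [← NormedSpace.exp_add_of_commute (Commute.neg_right (Commute.refl _)), add_neg_cancel,
      NormedSpace.exp_zero]
  have hinv' : NormedSpace.exp (-(fb • Gb)) * NormedSpace.exp (fb • Gb) = 1 := by
    rw [← NormedSpace.exp_add_of_commute (Commute.neg_left (Commute.refl _)), neg_add_cancel,
      NormedSpace.exp_zero]
  have hadd : NormedSpace.exp (-(fb • Ga)) * NormedSpace.exp ((fb - fa) • Ga)
      = NormedSpace.exp (-(fa • Ga)) := by
    rw [← NormedSpace.exp_add_of_commute]
    · congr 1; rw [sub_smul]; abel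
    · exact (((Commute.refl Ga).smul_left fb).smul_right (fb - fa)).neg_left
  have e1 : NormedSpace.exp (-(fb • Gb)) * Xb =
      (1 + NormedSpace.exp (-(fb • Gb)) * (NormedSpace.exp (fb • Ga) - NormedSpace.exp (fb • Gb)))
      * (NormedSpace.exp (-(fb • Ga)) * Xb) := by
    rw [mul_sub, hinv', add_sub_cancel, mul_assoc, ← mul_assoc (NormedSpace.exp (fb • Ga)), hinv,
      one_mul]
  have e2 : NormedSpace.exp (-(fb • Ga)) * Xb = NormedSpace.exp (-(fa • Ga)) * Xa +
      NormedSpace.exp (-(fb • Ga)) * ((Xb - Xa - (fb - fa) • (Ga * Xa)) -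
        (NormedSpace.exp ((fb - fa) • Ga) - 1 - (fb - fa) • Ga) * Xa) := by
    rw [← hadd, mul_assoc, ← mul_add]
    congr 1
    rw [sub_mul, sub_mul, one_mul, smul_mul_assoc]; abel
  have n1 : ‖1 + NormedSpace.exp (-(fb • Gb)) *
      (NormedSpace.exp (fb • Ga) - NormedSpace.exp (fb • Gb))‖
      ≤ 1 + N * Real.exp (M * K) * M * ‖Gb - Ga‖ := by
    have hl := aux_exp_lip (fb • Ga) (fb • Gb) (M * K) (hsm _ _ hfb hGa) (hsm _ _ hfb hGb)
    have hd : ‖fb • Ga - fb • Gb‖ ≤ M * ‖Gb - Ga‖ := by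
      rw [← smul_sub, norm_smul, Real.norm_eq_abs, norm_sub_rev Ga]; gcongr
    calc _ ≤ ‖(1 : 𝔸)‖ + ‖NormedSpace.exp (-(fb • Gb))‖ *
          ‖NormedSpace.exp (fb • Ga) - NormedSpace.exp (fb • Gb)‖ :=
          (norm_add_le _ _).trans (add_le_add le_rfl (norm_mul_le _ _))
      _ ≤ 1 + N * (Real.exp (M * K) * (M * ‖Gb - Ga‖)) := by
          gcongr
          · exact hN _ (by rw [norm_neg]; exact hsm _ _ hfb hGb)
          · exact hl.trans (by gcongr)
      _ = _ := by ring
  have n2 : ‖NormedSpace.exp (-(fb • Ga)) * Xb‖ ≤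
      ‖NormedSpace.exp (-(fa • Ga)) * Xa‖ + N * (‖Xb - Xa - (fb - fa) • (Ga * Xa)‖
        + ‖NormedSpace.exp ((fb - fa) • Ga) - 1 - (fb - fa) • Ga‖ * ‖Xa‖) := by
    rw [e2]
    refine (norm_add_le _ _).trans (add_le_add le_rfl ((norm_mul_le _ _).trans ?_))
    refine mul_le_mul (hN _ (by rw [norm_neg]; exact hsm _ _ hfb hGa)) ?_ (norm_nonneg _) hN0
    exact (norm_sub_le _ _).trans (add_le_add le_rfl (norm_mul_le _ _))
  rw [e1]
  exact (norm_mul_le _ _).trans (mul_le_mul n1 n2 (norm_nonneg _) (by positivity))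

theorem aux_iter (z d p : ℕ → ℝ) (C ε : ℝ) (hC : 0 ≤ C) (hε : 0 ≤ ε) (hz : ∀ i, 0 ≤ z i)
    (hd : ∀ i, 0 ≤ d i)
    (hp : ∀ i, 0 ≤ p i) (n : ℕ) (h : ∀ i < n, z (i + 1) ≤ (1 + C * d i) * (z i + ε * p i)) :
    z n ≤ Real.exp (C * ∑ i ∈ Finset.range n, d i) * (z 0 + ε * ∑ i ∈ Finset.range n, p i) := by
  induction n with
  | zero => simp
  | succ n ih =>
    have ih := ih (fun i hi => h i (by omega))
    have hs : 0 ≤ ∑ i ∈ Finset.range n, d i := Finset.sum_nonneg (fun i _ => hd i)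
    have h0 := hp n
    have h1 := hd n
    have h2 : 1 + C * d n ≤ Real.exp (C * d n) := by
      have := Real.add_one_le_exp (C * d n); linarith
    have h3 : 1 ≤ Real.exp (C * ∑ i ∈ Finset.range n, d i) := Real.one_le_exp (by positivity)
    have h4 : 0 ≤ ε * p n := by positivity
    rw [Finset.sum_range_succ, Finset.sum_range_succ, mul_add C, Real.exp_add]
    calc z (n + 1) ≤ (1 + C * d n) * (z n + ε * p n) := h n (by omega)
      _ ≤ Real.exp (C * d n) * (Real.exp (C * ∑ i ∈ Finset.range n, d i) *
          (z 0 + ε * ∑ i ∈ Finset.range n, p i) +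
          Real.exp (C * ∑ i ∈ Finset.range n, d i) * (ε * p n)) := by
          have := hz n
          refine mul_le_mul h2 (add_le_add ih ?_) (by positivity) (by positivity)
          exact le_mul_of_one_le_left h4 h3
      _ = _ := by ring

theorem aux_ac (f : ℝ → ℝ) (I : Set ℝ) (hf : LocallyAbsolutelyContinuousOn f I) (a b : ℝ)
    (ha : a ∈ I) (hb : b ∈ I) : AbsolutelyContinuousOnInterval f a b := by
  rw [absolutelyContinuousOnInterval_iff]
  intro ε hε
  have hmin : min a b ∈ I := by rcases min_choice a b with h | h <;> rw [h] <;> assumption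
  have hmax : max a b ∈ I := by rcases max_choice a b with h | h <;> rw [h] <;> assumption
  obtain ⟨δ, hδ, H⟩ := hf _ hmin _ hmax ε hε
  refine ⟨δ, hδ, ?_⟩
  rintro ⟨n, E⟩ hE hlen
  have hE1 := hE.1
  have hE2 := hE.2
  simp only at hE1 hE2 hlen ⊢
  have key := H n (fun i => min (E i).1 (E i).2) (fun i => max (E i).1 (E i).2) ?_ ?_ ?_
  · refine lt_of_le_of_lt (le_of_eq (Finset.sum_congr rfl fun i _ => ?_)) key
    rcases le_total (E i).1 (E i).2 with h | h
    · simp only [min_eq_left h, max_eq_right h]; rw [dist_comm]; rfl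
    · simp only [min_eq_right h, max_eq_left h]; rfl
  · intro i hi
    have h := hE1 i (Finset.mem_range.2 hi)
    have h1 : min a b ≤ (E i).1 ∧ (E i).1 ≤ max a b := h.1
    have h2 : min a b ≤ (E i).2 ∧ (E i).2 ≤ max a b := h.2
    exact ⟨⟨le_min h1.1 h2.1, (min_le_left _ _).trans h1.2⟩,
      ⟨h1.1.trans (le_max_left _ _), max_le h1.2 h2.2⟩, min_le_max⟩
  · intro i hi j hj hij
    have hd := hE2 (Finset.mem_coe.2 (Finset.mem_range.2 hi))
      (Finset.mem_coe.2 (Finset.mem_range.2 hj)) hij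
    have hd' : Disjoint (uIoc (E i).1 (E i).2) (uIoc (E j).1 (E j).2) := hd
    rw [← Set.disjoint_iff_inter_eq_empty]
    exact hd'.mono Ioo_subset_Ioc_self Ioo_subset_Ioc_self
  · refine lt_of_le_of_lt (le_of_eq (Finset.sum_congr rfl fun i _ => ?_)) hlen
    rw [max_sub_min_eq_abs', Real.dist_eq]

theorem aux_int (f f' : ℝ → ℝ) (I : Set ℝ) (hI : I.OrdConnected)
    (hf : LocallyAbsolutelyContinuousOn f I)
    (hf' : IsDerivWithinOf f' f I) (a b : ℝ) (ha : a ∈ I) (hb : b ∈ I) :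
    IntervalIntegrable f' volume a b ∧ ∫ x in a..b, f' x = f b - f a := by
  have hac := aux_ac f I hf a b ha hb
  have heq : (uIoo a b).EqOn (deriv f) f' := by
    intro x hx
    have hsub : uIcc a b ⊆ I := hI.uIcc_subset ha hb
    have hn : I ∈ nhds x := Filter.mem_of_superset (isOpen_Ioo.mem_nhds hx)
      (Ioo_subset_Icc_self.trans hsub)
    have h := hf' x (mem_of_mem_nhds hn)
    by_cases hd : DifferentiableAt ℝ f x
    · exact ((h.1 hd.differentiableWithinAt).hasDerivAt hn).deriv
    · rw [deriv_zero_of_not_differentiableAt hd, h.2]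
      intro h'
      exact hd (h'.differentiableAt hn)
  refine ⟨?_, ?_⟩
  · refine hac.intervalIntegrable_deriv.congr_ae ?_
    rw [Filter.EventuallyEq, ae_restrict_iff' measurableSet_uIoc]
    filter_upwards [(volume : Measure ℝ).ae_ne (a ⊔ b)] with x h hx
    exact heq ⟨hx.1, lt_of_le_of_ne hx.2 h⟩
  · rw [← intervalIntegral.integral_congr_uIoo heq, hac.integral_deriv_eq_sub]

theorem aux_sum (g : ℝ → ℝ) (hg : ∀ x, 0 ≤ g x) (a : ℕ → ℝ) (n : ℕ)
    (hm : Monotone a ∨ Antitone a)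
    (hint : ∀ k < n, IntervalIntegrable g volume (a k) (a (k + 1))) :
    ∑ k ∈ Finset.range n, |∫ x in a k..a (k + 1), g x| = |∫ x in a 0..a n, g x| := by
  rw [← intervalIntegral.sum_integral_adjacent_intervals hint]
  rcases hm with hm | hm
  · rw [Finset.abs_sum_of_nonneg]
    · refine Finset.sum_congr rfl fun k _ => abs_of_nonneg ?_
      exact intervalIntegral.integral_nonneg (hm (Nat.le_succ k)) (fun x _ => hg x)
    · intro k _
      exact intervalIntegral.integral_nonneg (hm (Nat.le_succ k)) (fun x _ => hg x)
  · have h : ∀ k, ∫ x in a k..a (k + 1), g x = -∫ x in a (k + 1)..a k, g x :=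
      fun k => intervalIntegral.integral_symm _ _
    simp only [h, abs_neg, Finset.sum_neg_distrib]
    rw [Finset.abs_sum_of_nonneg]
    · refine Finset.sum_congr rfl fun k _ => abs_of_nonneg ?_
      exact intervalIntegral.integral_nonneg (hm (Nat.le_succ k)) (fun x _ => hg x)
    · intro k _
      exact intervalIntegral.integral_nonneg (hm (Nat.le_succ k)) (fun x _ => hg x)

theorem aux_var {F : Type*} [NormedAddCommGroup F] (G : ℝ → F) (I : Set ℝ) (B : ℝ)
    (hB : ∀ v ∈ varSums G I, v ≤ B) (a : ℕ → ℝ) (n : ℕ) (ha : ∀ i ≤ n, a i ∈ I)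
    (hm : StrictMono a ∨ StrictAnti a) :
    ∑ i ∈ Finset.range n, ‖G (a (i + 1)) - G (a i)‖ ≤ B := by
  rcases hm with hm | hm
  · exact hB _ ⟨n, a, ha, fun i _ => hm (Nat.lt_succ_self i), rfl⟩
  · refine hB _ ⟨n, fun i => a (n - i), fun i _ => ha _ (Nat.sub_le _ _),
      fun i hi => hm (by omega), ?_⟩
    rw [← Finset.sum_range_reflect]
    refine Finset.sum_congr rfl fun i hi => ?_
    have hi := Finset.mem_range.1 hi
    rw [norm_sub_rev]
    congr 4 <;> omega

theorem aux_exp_small {𝔸 : Type*} [NormedRing 𝔸] [NormedAlgebra ℝ 𝔸] [CompleteSpace 𝔸]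
    (ε : ℝ) (hε : 0 < ε) :
    ∃ ρ > 0, ∀ u : 𝔸, ‖u‖ < ρ → ‖NormedSpace.exp u - 1 - u‖ ≤ ε * ‖u‖ := by
  have h := (hasFDerivAt_exp_zero (𝕂 := ℝ) (𝔸 := 𝔸)).isLittleO.def hε
  obtain ⟨ρ, hρ, H⟩ := Metric.eventually_nhds_iff.1 h
  refine ⟨ρ, hρ, fun u hu => ?_⟩
  have := H (y := u) (by simpa using hu)
  simpa [NormedSpace.exp_zero] using this

theorem aux_local {𝔸 : Type*} [NormedRing 𝔸] [NormedAlgebra ℝ 𝔸] [CompleteSpace 𝔸]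
    (f f' : ℝ → ℝ) (G X : ℝ → 𝔸) (s t : ℝ) (hG : ContinuousOn G (uIcc s t))
    (hX : ContinuousOn X (uIcc s t)) (hfc : ContinuousOn f (uIcc s t))
    (hint : ∀ a ∈ uIcc s t, ∀ b ∈ uIcc s t,
      IntervalIntegrable f' volume a b ∧ ∫ x in a..b, f' x = f b - f a)
    (hXe : ∀ a ∈ uIcc s t, ∀ b ∈ uIcc s t, X b - X a = ∫ τ in a..b, f' τ • (G τ * X τ))
    (ε : ℝ) (hε : 0 < ε) :
    ∃ δ > 0, ∀ a ∈ uIcc s t, ∀ b ∈ uIcc s t, |b - a| < δ →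
      ‖X b - X a - (f b - f a) • (G a * X a)‖
        + ‖NormedSpace.exp ((f b - f a) • G a) - 1 - (f b - f a) • G a‖ * ‖X a‖
      ≤ ε * |∫ x in a..b, (|f' x|)| := by
  have hJ : IsCompact (uIcc s t) := isCompact_uIcc
  obtain ⟨K, hK⟩ := hJ.exists_bound_of_continuousOn hG
  obtain ⟨S, hS⟩ := hJ.exists_bound_of_continuousOn hX
  have hK0 : 0 ≤ K := (norm_nonneg _).trans (hK s left_mem_uIcc)
  have hS0 : 0 ≤ S := (norm_nonneg _).trans (hS s left_mem_uIcc)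
  have hHc : ContinuousOn (fun τ => G τ * X τ) (uIcc s t) := hG.mul hX
  have hHu := hJ.uniformContinuousOn_of_continuous hHc
  have hfu := hJ.uniformContinuousOn_of_continuous hfc
  rw [Metric.uniformContinuousOn_iff] at hHu hfu
  obtain ⟨δ₁, hδ₁, H1⟩ := hHu (ε / 2) (by positivity)
  obtain ⟨ρ, hρ, H2⟩ := aux_exp_small (𝔸 := 𝔸) (ε / (2 * ((K + 1) * (S + 1)))) (by positivity)
  obtain ⟨δ₂, hδ₂, H3⟩ := hfu (ρ / (K + 1)) (by positivity)
  refine ⟨min δ₁ δ₂, lt_min hδ₁ hδ₂, fun a ha b hb hab => ?_⟩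
  obtain ⟨hi, hi2⟩ := hint a ha b hb
  have hsub : uIcc a b ⊆ uIcc s t := uIcc_subset_uIcc ha hb
  have hfab : |f b - f a| ≤ |∫ x in a..b, (|f' x|)| := by
    rw [← hi2]
    exact intervalIntegral.norm_integral_le_abs_integral_norm (f := f') (μ := volume)
  have A1 : ‖X b - X a - (f b - f a) • (G a * X a)‖ ≤ ε / 2 * |∫ x in a..b, (|f' x|)| := by
    have e : X b - X a - (f b - f a) • (G a * X a)
        = ∫ τ in a..b, f' τ • (G τ * X τ - G a * X a) := by
      rw [hXe a ha b hb, ← hi2, ← intervalIntegral.integral_smul_const,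
        ← intervalIntegral.integral_sub]
      · simp only [smul_sub]
      · exact hi.smul_continuousOn (hHc.mono hsub)
      · exact hi.smul_continuousOn continuousOn_const
    rw [e]
    have := intervalIntegral.norm_integral_le_abs_of_norm_le (μ := volume) (a := a) (b := b)
      (f := fun τ => f' τ • (G τ * X τ - G a * X a)) (g := fun τ => ε / 2 * |f' τ|) ?_
      (hi.abs.const_mul _)
    · rwa [intervalIntegral.integral_const_mul, abs_mul, abs_of_pos (half_pos hε)] at this
    · rw [ae_restrict_iff' measurableSet_uIoc]
      refine Filter.Eventually.of_forall fun τ hτ => ?_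
      have hτ' : τ ∈ uIcc a b := uIoc_subset_uIcc hτ
      have hd : dist τ a < δ₁ := by
        rw [Real.dist_eq]
        exact (abs_sub_left_of_mem_uIcc hτ').trans_lt (hab.trans_le (min_le_left _ _))
      have := (H1 τ (hsub hτ') a ha hd).le
      rw [dist_eq_norm] at this
      rw [norm_smul, Real.norm_eq_abs, mul_comm]
      gcongr
  have A2 : ‖NormedSpace.exp ((f b - f a) • G a) - 1 - (f b - f a) • G a‖ * ‖X a‖
      ≤ ε / 2 * |∫ x in a..b, (|f' x|)| := by
    have hfd : |f b - f a| < ρ / (K + 1) := by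
      have := H3 b hb a ha (by rw [Real.dist_eq]; exact hab.trans_le (min_le_right _ _))
      rwa [Real.dist_eq] at this
    have hu : ‖(f b - f a) • G a‖ ≤ |f b - f a| * (K + 1) := by
      rw [norm_smul, Real.norm_eq_abs]
      gcongr
      exact (hK a ha).trans (by linarith)
    have hu' : ‖(f b - f a) • G a‖ < ρ := by
      refine hu.trans_lt ?_
      rwa [lt_div_iff₀ (by positivity)] at hfd
    calc _ ≤ (ε / (2 * ((K + 1) * (S + 1))) * (|f b - f a| * (K + 1))) * (S + 1) := by
          gcongr
          · exact (H2 _ hu').trans (by gcongr)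
          · exact (hS a ha).trans (by linarith)
      _ = ε / 2 * |f b - f a| := by field_simp
      _ ≤ _ := by gcongr
  linarith

theorem aux_main {𝔸 : Type*} [NormedRing 𝔸] [NormedAlgebra ℝ 𝔸] [CompleteSpace 𝔸]
    (h1 : ‖(1 : 𝔸)‖ ≤ 1) (M K N B : ℝ) (hM0 : 0 ≤ M)
    (hN : ∀ u : 𝔸, ‖u‖ ≤ M * K → ‖NormedSpace.exp u‖ ≤ N)
    (hN0 : 0 ≤ N) (f f' : ℝ → ℝ) (G X : ℝ → 𝔸) (s t : ℝ) (hst : s ≠ t)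
    (hG : ContinuousOn G (uIcc s t))
    (hX : ContinuousOn X (uIcc s t)) (hfc : ContinuousOn f (uIcc s t))
    (hint : ∀ a ∈ uIcc s t, ∀ b ∈ uIcc s t,
      IntervalIntegrable f' volume a b ∧ ∫ x in a..b, f' x = f b - f a)
    (hXe : ∀ a ∈ uIcc s t, ∀ b ∈ uIcc s t, X b - X a = ∫ τ in a..b, f' τ • (G τ * X τ))
    (hfM : ∀ a ∈ uIcc s t, |f a| ≤ M) (hGK : ∀ a ∈ uIcc s t, ‖G a‖ ≤ K)
    (hB : ∀ v ∈ varSums G (uIcc s t), v ≤ B) :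
    ‖NormedSpace.exp (-(f t • G t)) * X t‖ ≤
      Real.exp (N * Real.exp (M * K) * M * B) * ‖NormedSpace.exp (-(f s • G s)) * X s‖ := by
  set C := N * Real.exp (M * K) * M with hC
  have hC0 : 0 ≤ C := by positivity
  set L := |∫ x in s..t, (|f' x|)| with hL
  have hL0 : 0 ≤ L := abs_nonneg _
  refine le_of_forall_pos_le_add fun η hη => ?_
  set ε := η / (Real.exp (C * B) * (N + 1) * (L + 1)) with hεdef
  have hε : 0 < ε := by positivity
  obtain ⟨δ, hδ, H⟩ := aux_local f f' G X s t hG hX hfc hint hXe ε hε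
  obtain ⟨n, hn⟩ := exists_nat_gt (|t - s| / δ)
  have hn0 : (0 : ℝ) < n := lt_of_le_of_lt (by positivity) hn
  set a : ℕ → ℝ := fun i => s + i * ((t - s) / n) with ha
  have ha0 : a 0 = s := by simp [ha]
  have han : a n = t := by simp only [ha]; field_simp; ring
  have hstep : ∀ i, a (i + 1) - a i = (t - s) / n := by intro i; simp only [ha]; push_cast; ring
  have hsm : StrictMono a ∨ StrictAnti a := by
    rcases lt_or_gt_of_ne hst with h | h
    · left
      refine strictMono_nat_of_lt_succ fun i => ?_
      have : 0 < (t - s) / n := div_pos (by linarith) hn0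
      linarith [hstep i]
    · right
      refine strictAnti_nat_of_succ_lt fun i => ?_
      have : (t - s) / n < 0 := div_neg_of_neg_of_pos (by linarith) hn0
      linarith [hstep i]
  have hmem : ∀ i ≤ n, a i ∈ uIcc s t := by
    intro i hi
    rw [← ha0, ← han, mem_uIcc]
    rcases hsm with h | h
    · left; exact ⟨h.monotone (Nat.zero_le i), h.monotone hi⟩
    · right; exact ⟨h.antitone hi, h.antitone (Nat.zero_le i)⟩
  have hit := aux_iter (fun i => ‖NormedSpace.exp (-(f (a i) • G (a i))) * X (a i)‖)
    (fun i => ‖G (a (i + 1)) - G (a i)‖) (fun i => |∫ x in a i..a (i + 1), (|f' x|)|) C (N * ε)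
    hC0 (by positivity) (fun i => norm_nonneg _) (fun i => norm_nonneg _)
    (fun i => abs_nonneg _) n ?_
  · have hv := aux_var G _ B hB a n hmem hsm
    have hsum := aux_sum (fun x => |f' x|) (fun x => abs_nonneg _) a n
      (hsm.imp StrictMono.monotone StrictAnti.antitone)
      (fun k hk => (hint _ (hmem k (by omega)) _ (hmem (k + 1) (by omega))).1.abs)
    rw [hsum] at hit
    simp only [ha0, han] at hit
    calc _ ≤ _ := hit
      _ ≤ Real.exp (C * B) * (‖NormedSpace.exp (-(f s • G s)) * X s‖ + N * ε * L) := by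
        gcongr
      _ = Real.exp (C * B) * ‖NormedSpace.exp (-(f s • G s)) * X s‖
          + Real.exp (C * B) * N * L * ε := by ring
      _ ≤ Real.exp (C * B) * ‖NormedSpace.exp (-(f s • G s)) * X s‖
          + Real.exp (C * B) * (N + 1) * (L + 1) * ε := by gcongr <;> linarith
      _ = _ := by rw [hεdef]; field_simp
  · intro i hi
    have hm1 := hmem i hi.le
    have hm2 := hmem (i + 1) hi
    refine (aux_step h1 M K N hN (f (a i)) (f (a (i + 1))) (G (a i)) (G (a (i + 1))) (X (a i))
      (X (a (i + 1))) (hfM _ hm1) (hfM _ hm2) (hGK _ hm1) (hGK _ hm2)).trans ?_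
    have hl := H _ hm1 _ hm2 (by
      rw [hstep, abs_div, abs_of_pos hn0, div_lt_iff₀ hn0]
      rw [div_lt_iff₀ hδ] at hn
      linarith)
    rw [mul_assoc N ε]
    gcongr

/-- If `G̃ : I → End(E)` is continuous and of bounded variation and
`f ∈ AC_loc(I)` has bounded image, then `A(t) = f'(t) G̃(t)` is bistable in `E`. -/
theorem stmt11 {E : Type*} [NormedAddCommGroup E] [NormedSpace ℝ E] [CompleteSpace E]
    (I : Set ℝ) (hI : I.OrdConnected)
    (Gt : ℝ → E →L[ℝ] E) (hGc : ContinuousOn Gt I)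
    (hBV : BddAbove (varSums Gt I))
    (f f' : ℝ → ℝ)
    (hf : LocallyAbsolutelyContinuousOn f I)
    (hf' : IsDerivWithinOf f' f I)
    (hbd : Bornology.IsBounded (f '' I))
    (A : ℝ → E →L[ℝ] E) (hA : ∀ t ∈ I, A t = f' t • Gt t) :
    ∃ C > (0 : ℝ), ∀ X, IsEvolutionOperator I A X →
      ∀ s ∈ I, ∀ t ∈ I, ‖X t s‖ ≤ C := by
  rcases I.eq_empty_or_nonempty with rfl | ⟨x₀, hx₀⟩
  · exact ⟨1, one_pos, fun X _ s hs => absurd hs (Set.notMem_empty s)⟩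
  obtain ⟨B, hB⟩ := hBV
  obtain ⟨M, hM⟩ := hbd.exists_norm_le
  have hfM : ∀ a ∈ I, |f a| ≤ M := fun a ha => hM _ (mem_image_of_mem f ha)
  have hM0 : 0 ≤ M := (abs_nonneg _).trans (hfM x₀ hx₀)
  have hB0 : 0 ≤ B := hB ⟨0, fun _ => x₀, fun _ _ => hx₀, fun i hi => absurd hi (by omega), by simp⟩
  have hB2 : ∀ a ∈ I, ∀ b ∈ I, a < b → ‖Gt b - Gt a‖ ≤ B := by
    intro a ha b hb hab
    refine hB ⟨1, fun i => if i = 0 then a else b, ?_, ?_, by simp⟩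
    · intro i _
      dsimp only
      split_ifs <;> assumption
    · intro i hi
      have : i = 0 := by omega
      subst this
      simpa using hab
  set K := ‖Gt x₀‖ + B with hK
  have hGK : ∀ a ∈ I, ‖Gt a‖ ≤ K := by
    intro a ha
    have h : ‖Gt a - Gt x₀‖ ≤ B := by
      rcases lt_trichotomy a x₀ with h | h | h
      · rw [norm_sub_rev]; exact hB2 a ha x₀ hx₀ h
      · rw [h]; simpa using hB0
      · exact hB2 x₀ hx₀ a ha h
    have := norm_le_norm_add_norm_sub' (Gt a) (Gt x₀)
    linarith
  have hK0 : 0 ≤ K := by positivity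
  have h1 : ‖(1 : E →L[ℝ] E)‖ ≤ 1 := ContinuousLinearMap.norm_id_le
  set N := 1 + Real.exp (M * K) * (M * K) with hNdef
  have hN0 : 0 < N := by positivity
  have hN : ∀ u : E →L[ℝ] E, ‖u‖ ≤ M * K → ‖NormedSpace.exp u‖ ≤ N := by
    intro u hu
    have h := aux_exp_lip u 0 (M * K) hu (by rw [norm_zero]; positivity)
    rw [NormedSpace.exp_zero, sub_zero] at h
    have h2 := norm_le_norm_add_norm_sub' (NormedSpace.exp u) 1
    have h3 : Real.exp (M * K) * ‖u‖ ≤ Real.exp (M * K) * (M * K) := by gcongr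
    linarith
  have hsm : ∀ a ∈ I, ‖f a • Gt a‖ ≤ M * K := by
    intro a ha
    rw [norm_smul, Real.norm_eq_abs]
    exact mul_le_mul (hfM a ha) (hGK a ha) (norm_nonneg _) hM0
  refine ⟨max 1 (N * (Real.exp (N * Real.exp (M * K) * M * B) * N)), by positivity, ?_⟩
  intro X hX s hs t ht
  obtain ⟨hXc, hXs, hXe⟩ := hX s hs
  by_cases hst : s = t
  · subst hst
    rw [hXs]
    exact ContinuousLinearMap.norm_id_le.trans (le_max_left _ _)
  refine le_trans ?_ (le_max_right _ _)
  have hsub : uIcc s t ⊆ I := hI.uIcc_subset hs ht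
  have key := aux_main h1 M K N B hM0 hN hN0.le f f' Gt (fun τ => X τ s) s t hst
    (hGc.mono hsub) (hXc.mono hsub) (aux_ac f I hf s t hs ht).continuousOn
    (fun a ha b hb => aux_int f f' I hI hf hf' a b (hsub ha) (hsub hb)) ?_
    (fun a ha => hfM a (hsub ha)) (fun a ha => hGK a (hsub ha)) ?_
  · have hz : ‖NormedSpace.exp (-(f s • Gt s)) * X s s‖ ≤ N := by
      rw [hXs]
      change ‖NormedSpace.exp (-(f s • Gt s)) * 1‖ ≤ N
      rw [mul_one]
      exact hN _ (by rw [norm_neg]; exact hsm s hs)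
    have hinv : NormedSpace.exp (f t • Gt t) * NormedSpace.exp (-(f t • Gt t)) = 1 := by
      let _ : NormedAlgebra ℚ (E →L[ℝ] E) := NormedAlgebra.restrictScalars ℚ ℝ _
      rw [← NormedSpace.exp_add_of_commute (Commute.neg_right (Commute.refl _)), add_neg_cancel,
        NormedSpace.exp_zero]
    have e : X t s = NormedSpace.exp (f t • Gt t) * (NormedSpace.exp (-(f t • Gt t)) * X t s) := by
      rw [← mul_assoc, hinv, one_mul]
    rw [e]
    refine (norm_mul_le _ _).trans (mul_le_mul (hN _ (hsm t ht)) (key.trans ?_) (norm_nonneg _)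
      hN0.le)
    gcongr
  · intro a ha b hb
    change X b s - X a s = _
    rw [hXe a (hsub ha) b (hsub hb)]
    refine intervalIntegral.integral_congr fun τ hτ => ?_
    have hτI : τ ∈ I := hI.uIcc_subset (hsub ha) (hsub hb) hτ
    change A τ * X τ s = _
    rw [hA τ hτI, smul_mul_assoc]
  · rintro v ⟨n, a, h1, h2, h3⟩
    exact hB ⟨n, a, fun i hi => hsub (h1 i hi), h2, h3⟩
end

section
/- Let G̃ : [0, ∞) → Matrix (Fin 2) (Fin 2) ℝ be given by G̃(t) = [[2 arctan t, √(t+1) − √t], [−1/(1+t²), 1 + e^{−t}]], and f(t) = sin t. Then the system A(t) = f'(t) G̃(t) = cos(t) G̃(t) is bistable: there exists C > 0 such that every evolution operator X for A in ℝ² satisfies ‖X(t, s)‖ ≤ C for all s, t ≥ 0. -/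
open MeasureTheory Set

/-- The matrix `G̃(t)` of the example. -/
noncomputable def exGmat (t : ℝ) : Matrix (Fin 2) (Fin 2) ℝ :=
  !![2 * Real.arctan t, Real.sqrt (t + 1) - Real.sqrt t;
     -(1 / (1 + t ^ 2)), 1 + Real.exp (-t)]

lemma aux_deriv_r (t : ℝ) (ht : 0 ≤ t) :
    HasDerivAt (fun τ : ℝ => (Real.sqrt (1 + τ))⁻¹) (-((Real.sqrt (1 + t))⁻¹ ^ 3 / 2)) t := by
  have h0 : (0:ℝ) < 1 + t := by linarith
  have h1 : HasDerivAt (fun τ : ℝ => 1 + τ) 1 t := (hasDerivAt_id t).const_add 1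
  have h2 := (h1.sqrt h0.ne').inv (Real.sqrt_pos.2 h0).ne'
  refine h2.congr_deriv ?_
  have : Real.sqrt (1 + t) ≠ 0 := (Real.sqrt_pos.2 h0).ne'
  field_simp

lemma aux_gron (K : ℝ) (hK : 0 ≤ K) (V V' : ℝ → ℝ) (hV : ∀ t, 0 ≤ V t)
    (hd : ∀ t, 0 ≤ t → HasDerivWithinAt V (V' t) (Ici 0) t)
    (hb : ∀ t, 0 ≤ t → |V' t| ≤ K * (Real.sqrt (1 + t))⁻¹ ^ 3 * V t) :
    ∀ s t, 0 ≤ s → 0 ≤ t → V t ≤ Real.exp (2 * K) * V s := by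
  have hr1 : ∀ t : ℝ, 0 ≤ t → (Real.sqrt (1 + t))⁻¹ ≤ 1 := fun t ht =>
    inv_le_one_of_one_le₀ (Real.one_le_sqrt.2 (by linarith))
  have hr0 : ∀ t : ℝ, 0 ≤ (Real.sqrt (1 + t))⁻¹ := fun t => inv_nonneg.2 (Real.sqrt_nonneg _)
  have hE : ∀ c t : ℝ, 0 ≤ t → HasDerivWithinAt
      (fun τ => V τ * Real.exp (c * (Real.sqrt (1 + τ))⁻¹))
      (V' t * Real.exp (c * (Real.sqrt (1 + t))⁻¹) + V t *
        (Real.exp (c * (Real.sqrt (1 + t))⁻¹) * (c * -((Real.sqrt (1 + t))⁻¹ ^ 3 / 2))))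
      (Ici 0) t := fun c t ht =>
    (hd t ht).mul (((aux_deriv_r t ht).const_mul c).exp.hasDerivWithinAt)
  have hanti : AntitoneOn (fun τ => V τ * Real.exp ((2*K) * (Real.sqrt (1 + τ))⁻¹)) (Ici 0) := by
    refine antitoneOn_of_hasDerivWithinAt_nonpos (convex_Ici 0)
      (fun t ht => (hE (2*K) t ht).continuousWithinAt)
      (fun t ht => (hE (2*K) t (interior_subset ht)).mono interior_subset) ?_
    intro t ht
    have ht : (0:ℝ) ≤ t := interior_subset ht
    have := (abs_le.1 (hb t ht)).2
    have he := Real.exp_pos ((2*K) * (Real.sqrt (1 + t))⁻¹)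
    nlinarith
  have hmono : MonotoneOn (fun τ => V τ * Real.exp ((-(2*K)) * (Real.sqrt (1 + τ))⁻¹)) (Ici 0) := by
    refine monotoneOn_of_hasDerivWithinAt_nonneg (convex_Ici 0)
      (fun t ht => (hE (-(2*K)) t ht).continuousWithinAt)
      (fun t ht => (hE (-(2*K)) t (interior_subset ht)).mono interior_subset) ?_
    intro t ht
    have ht : (0:ℝ) ≤ t := interior_subset ht
    have := (abs_le.1 (hb t ht)).1
    have he := Real.exp_pos ((-(2*K)) * (Real.sqrt (1 + t))⁻¹)
    nlinarith
  intro s t hs ht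
  rcases le_total s t with h | h
  · have h1 := hanti hs ht h
    simp only at h1
    have h2 : 1 ≤ Real.exp ((2*K) * (Real.sqrt (1 + t))⁻¹) :=
      Real.one_le_exp (mul_nonneg (by linarith) (hr0 t))
    have h3 : Real.exp ((2*K) * (Real.sqrt (1 + s))⁻¹) ≤ Real.exp (2*K) :=
      Real.exp_le_exp.2 (by nlinarith [hr1 s hs])
    nlinarith [hV t, hV s]
  · have h1 := hmono ht hs h
    simp only at h1
    have h2 : Real.exp ((-(2*K)) * (Real.sqrt (1 + s))⁻¹) ≤ 1 :=
      Real.exp_le_one_iff.2 (by nlinarith [mul_nonneg hK (hr0 s)])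
    have h3 : Real.exp (-(2*K)) ≤ Real.exp ((-(2*K)) * (Real.sqrt (1 + t))⁻¹)  :=
      Real.exp_le_exp.2 (by nlinarith [hr1 t ht])
    have h4 : Real.exp (2*K) * Real.exp (-(2*K)) = 1 := by rw [← Real.exp_add]; simp
    have h5 : V t * Real.exp (-(2*K)) ≤ V s := by nlinarith [hV t, hV s]
    have := mul_le_mul_of_nonneg_left h5 (Real.exp_pos (2*K)).le
    calc V t = V t * (Real.exp (2*K) * Real.exp (-(2*K))) := by rw [h4, mul_one]
      _ = Real.exp (2 * K) * (V t * Real.exp (-(2 * K))) := by ring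
      _ ≤ _ := this

lemma aux_exp_diff (M x y : ℝ) (hx : x ≤ M) (hy : y ≤ M) :
    |Real.exp x - Real.exp y| ≤ Real.exp M * |x - y| := by
  wlog h : y ≤ x generalizing x y
  · rw [abs_sub_comm, abs_sub_comm x y]; exact this y x hy hx (le_of_not_ge h)
  rw [abs_of_nonneg (by linarith [Real.exp_le_exp.2 h]), abs_of_nonneg (by linarith)]
  have h1 : Real.exp y = Real.exp x * Real.exp (y - x) := by rw [← Real.exp_add]; ring_nf
  have h2 := Real.add_one_le_exp (y - x)
  have h3 := Real.exp_le_exp.2 hx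
  have h4 := Real.exp_pos x
  nlinarith

lemma aux_alg (k L α β γ δ B v1 v2 : ℝ) (hk : 0 ≤ k) (hL : 0 ≤ L)
    (hα : |α| ≤ k) (hβ : |β| ≤ k) (hγ : |γ| ≤ k) (hδ : |δ| ≤ k) (hB : |B| ≤ L) :
    |2 * v1 * (α * (v1 + B * v2) + β * v2 - B * (γ * (v1 + B * v2) + δ * v2))
      + 2 * v2 * (γ * (v1 + B * v2) + δ * v2)| ≤ 4 * (k * (1 + L)^2) * (v1^2 + v2^2) := by
  have hu : |v1 + B * v2| ≤ |v1| + L * |v2| := by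
    refine (abs_add_le _ _).trans ?_
    rw [abs_mul]; gcongr
  have e0 : |v1 + B * v2| + |v2| ≤ (1 + L) * (|v1| + |v2|) := by
    nlinarith [abs_nonneg v1, abs_nonneg v2, mul_nonneg hL (abs_nonneg v1)]
  have e1 : |α * (v1 + B * v2) + β * v2| ≤ k * (|v1 + B * v2| + |v2|) := by
    refine (abs_add_le _ _).trans ?_
    rw [abs_mul, abs_mul, mul_add]; gcongr
  have e2 : |γ * (v1 + B * v2) + δ * v2| ≤ k * (|v1 + B * v2| + |v2|) := by
    refine (abs_add_le _ _).trans ?_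
    rw [abs_mul, abs_mul, mul_add]; gcongr
  have e1' : |α * (v1 + B * v2) + β * v2| ≤ k * ((1 + L) * (|v1| + |v2|)) :=
    e1.trans (by gcongr)
  have e2' : |γ * (v1 + B * v2) + δ * v2| ≤ k * ((1 + L) * (|v1| + |v2|)) :=
    e2.trans (by gcongr)
  have e3 : |α * (v1 + B * v2) + β * v2 - B * (γ * (v1 + B * v2) + δ * v2)|
      ≤ k * ((1 + L) * (|v1| + |v2|)) + L * (k * ((1 + L) * (|v1| + |v2|))) := by
    refine (abs_sub _ _).trans ?_
    rw [abs_mul B]; gcongr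
  have e4 : |2 * v1 * (α * (v1 + B * v2) + β * v2 - B * (γ * (v1 + B * v2) + δ * v2))
      + 2 * v2 * (γ * (v1 + B * v2) + δ * v2)| ≤
      2 * |v1| * (k * ((1 + L) * (|v1| + |v2|)) + L * (k * ((1 + L) * (|v1| + |v2|))))
      + 2 * |v2| * (k * ((1 + L) * (|v1| + |v2|))) := by
    refine (abs_add_le _ _).trans ?_
    rw [abs_mul (2 * v1), abs_mul (2 * v2), abs_mul 2 v1, abs_mul 2 v2, abs_two]
    gcongr
  refine e4.trans ?_
  rw [← sq_abs v1, ← sq_abs v2]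
  have a1 := abs_nonneg v1
  have a2 := abs_nonneg v2
  generalize |v1| = p at *
  generalize |v2| = q at *
  have : 2 * p * (k * ((1 + L) * (p + q)) + L * (k * ((1 + L) * (p + q))))
      + 2 * q * (k * ((1 + L) * (p + q))) ≤ 2 * (k * (1+L)^2) * (p + q)^2 := by
    have : 0 ≤ k * (1 + L) * L * q * (p + q) := by positivity
    nlinarith
  refine this.trans ?_
  have h5 : 0 ≤ 2 * (k * (1+L)^2) := by positivity
  nlinarith [mul_nonneg h5 (sq_nonneg (p - q))]

lemma aux_sq (t : ℝ) (ht : 0 ≤ t) : 1 / (1 + t^2) ≤ 2 * (Real.sqrt (1 + t))⁻¹ ^ 3 := by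
  have h0 : (0:ℝ) < 1 + t := by linarith
  have hp : 1 ≤ Real.sqrt (1 + t) := Real.one_le_sqrt.2 (by linarith)
  have hq : Real.sqrt (1 + t) ^ 2 = 1 + t := Real.sq_sqrt h0.le
  rw [inv_pow, ← div_eq_mul_inv, div_le_div_iff₀ (by positivity) (by positivity)]
  have : Real.sqrt (1 + t) ^ 3 ≤ Real.sqrt (1+t)^4 := pow_le_pow_right₀ hp (by norm_num)
  have h4 : Real.sqrt (1+t)^4 = (1+t)^2 := by
    calc Real.sqrt (1+t)^4 = (Real.sqrt (1+t)^2)^2 := by ring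
      _ = _ := by rw [hq]
  nlinarith [sq_nonneg (1 - t)]

lemma aux_e (t : ℝ) (ht : 0 ≤ t) : Real.exp (-t) ≤ 2 * (Real.sqrt (1 + t))⁻¹ ^ 3 := by
  have h0 : (0:ℝ) < 1 + t := by linarith
  refine le_trans ?_ (aux_sq t ht)
  rw [Real.exp_neg, ← one_div]
  refine one_div_le_one_div_of_le (by positivity) ?_
  have h1 := Real.sum_le_exp_of_nonneg ht 4
  simp [Finset.sum_range_succ, Nat.factorial] at h1
  nlinarith [mul_nonneg ht (sq_nonneg (t - 3/2))]

lemma aux_b (t : ℝ) (ht : 0 ≤ t) :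
    |Real.sqrt (t + 1) - Real.sqrt t - (Real.sqrt (1 + t))⁻¹ / 2| ≤ (Real.sqrt (1 + t))⁻¹ ^ 3 := by
  have h0 : (0:ℝ) < 1 + t := by linarith
  rw [add_comm t 1]
  have hp : 1 ≤ Real.sqrt (1 + t) := Real.one_le_sqrt.2 (by linarith)
  have hq : Real.sqrt (1 + t) ^ 2 = 1 + t := Real.sq_sqrt h0.le
  have hq' : Real.sqrt t ^ 2 = t := Real.sq_sqrt ht
  have hq0 := Real.sqrt_nonneg t
  generalize Real.sqrt (1+t) = p at *
  generalize Real.sqrt t = q at *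
  have hpp : 0 < p := by linarith
  have h1 : p - q = 1 / (p + q) := by
    rw [eq_div_iff (by positivity)]; nlinarith
  have h2 : p - q - p⁻¹/2 = 1 / (2 * p * (p+q)^2) := by
    have : p - q - p⁻¹/2 = (p - q) * (1/(p+q)) / (2 * p) := by
      rw [h1]; 
      have h3 : (p+q)*(p-q) = 1 := by nlinarith
      field_simp
      nlinarith
    rw [this, h1]; field_simp
  rw [h2, abs_of_nonneg (by positivity), inv_pow, ← one_div]
  refine one_div_le_one_div_of_le (by positivity) ?_
  nlinarith [mul_nonneg hpp.le (mul_nonneg hpp.le hq0), mul_nonneg hpp.le (sq_nonneg q), pow_pos hpp 3]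

lemma aux_a (t : ℝ) (ht : 0 ≤ t) :
    |Real.pi - 2 * Real.arctan t| ≤ 8 * (Real.sqrt (1 + t))⁻¹ ^ 2 := by
  have h0 : (0:ℝ) < 1 + t := by linarith
  rw [abs_of_nonneg (by linarith [Real.arctan_lt_pi_div_two t]), inv_pow, Real.sq_sqrt h0.le]
  have hpi := Real.pi_lt_four
  rcases lt_or_ge t 1 with h | h
  · have : (2:ℝ)⁻¹ ≤ (1+t)⁻¹ := inv_anti₀ h0 (by linarith)
    have := Real.arctan_nonneg.2 ht
    linarith
  · have hpos : 0 < t := by linarith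
    have h1 := Real.arctan_inv_of_pos hpos
    have h2 : Real.arctan t⁻¹ ≤ t⁻¹ := by
      have := Real.le_tan (x := Real.arctan t⁻¹) (Real.arctan_nonneg.2 (by positivity)) (Real.arctan_lt_pi_div_two _)
      rwa [Real.tan_arctan] at this
    have h3 : t⁻¹ ≤ 2 * (1+t)⁻¹ := by
      rw [inv_eq_one_div, ← div_eq_mul_inv, div_le_div_iff₀ hpos h0]; linarith
    have : 0 < (1+t)⁻¹ := by positivity
    linarith

lemma aux_exp3 (S w : ℝ) (hS : |S| ≤ 1) (hw : |w| ≤ 3) : Real.exp (S * w) ≤ Real.exp 3 := by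
  refine Real.exp_le_exp.2 ((le_abs_self _).trans ?_)
  rw [abs_mul]; nlinarith [abs_nonneg S, abs_nonneg w]

lemma aux_exp4 (S w : ℝ) (hS : |S| ≤ 1) (hw : |w| ≤ 4) : Real.exp (S * w) ≤ Real.exp 4 := by
  refine Real.exp_le_exp.2 ((le_abs_self _).trans ?_)
  rw [abs_mul]; nlinarith [abs_nonneg S, abs_nonneg w]

noncomputable def auxB (t : ℝ) : ℝ :=
  (Real.sqrt (1 + t))⁻¹ / 2 * (Real.exp (Real.sin t * (1 - Real.pi)) / (1 - Real.pi))

lemma auxB_deriv (t : ℝ) (ht : 0 ≤ t) : HasDerivAt auxB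
    (-((Real.sqrt (1 + t))⁻¹ ^ 3 / 4) * (Real.exp (Real.sin t * (1 - Real.pi)) / (1 - Real.pi))
      + (Real.sqrt (1 + t))⁻¹ / 2 * (Real.cos t * Real.exp (Real.sin t * (1 - Real.pi)))) t := by
  have h := ((aux_deriv_r t ht).div_const 2).mul
    ((((Real.hasDerivAt_sin t).mul_const (1 - Real.pi)).exp).div_const (1 - Real.pi))
  refine h.congr_deriv ?_
  have : 1 - Real.pi ≠ 0 := by linarith [Real.pi_gt_three]
  field_simp
  ring

lemma aux_h (t : ℝ) : |Real.exp (Real.sin t * (1 - Real.pi)) / (1 - Real.pi)| ≤ Real.exp 3 := by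
  have hpi := Real.pi_gt_three
  have hpi' := Real.pi_lt_four
  rw [abs_div, abs_of_pos (Real.exp_pos _), abs_of_neg (by linarith : 1 - Real.pi < 0)]
  rw [div_le_iff₀ (by linarith)]
  have := aux_exp3 (Real.sin t) (1 - Real.pi) (Real.abs_sin_le_one t)
    (by rw [abs_le]; constructor <;> linarith)
  nlinarith [Real.exp_pos 3]

lemma auxB_bound (t : ℝ) (ht : 0 ≤ t) : |auxB t| ≤ Real.exp 3 := by
  have h1 := aux_h t
  have hr1 : (Real.sqrt (1 + t))⁻¹ ≤ 1 :=
    inv_le_one_of_one_le₀ (Real.one_le_sqrt.2 (by linarith))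
  have hr0 : 0 ≤ (Real.sqrt (1 + t))⁻¹ := inv_nonneg.2 (Real.sqrt_nonneg _)
  rw [auxB, abs_mul, abs_of_nonneg (by positivity)]
  nlinarith [abs_nonneg (Real.exp (Real.sin t * (1 - Real.pi)) / (1 - Real.pi)), Real.exp_pos 3]

noncomputable def auxV1 (x1 x2 : ℝ → ℝ) (t : ℝ) : ℝ :=
  Real.exp (-(Real.sin t * (2 * Real.arctan t))) * x1 t - auxB t * (Real.exp (-Real.sin t) * x2 t)

noncomputable def auxV2 (x2 : ℝ → ℝ) (t : ℝ) : ℝ := Real.exp (-Real.sin t) * x2 t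

lemma aux_beta (t : ℝ) (ht : 0 ≤ t) :
    |Real.cos t * ((Real.sqrt (t + 1) - Real.sqrt t - (Real.sqrt (1 + t))⁻¹ / 2)
        * Real.exp (Real.sin t * (1 - 2 * Real.arctan t))
      + (Real.sqrt (1 + t))⁻¹ / 2 * (Real.exp (Real.sin t * (1 - 2 * Real.arctan t))
        - Real.exp (Real.sin t * (1 - Real.pi))))
      + (Real.sqrt (1 + t))⁻¹ ^ 3 / 4 * (Real.exp (Real.sin t * (1 - Real.pi)) / (1 - Real.pi))|
      ≤ 6 * Real.exp 3 * (Real.sqrt (1 + t))⁻¹ ^ 3 := by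
  have hpi := Real.pi_gt_three
  have hpi' := Real.pi_lt_four
  have hS := Real.abs_sin_le_one t
  have hC := Real.abs_cos_le_one t
  have ha0 := Real.arctan_nonneg.2 ht
  have ha1 := Real.arctan_lt_pi_div_two t
  have hb := aux_b t ht
  have ha := aux_a t ht
  have hh := aux_h t
  have hP := aux_exp3 (Real.sin t) (1 - 2 * Real.arctan t) hS
    (by rw [abs_le]; constructor <;> linarith)
  have hr0 : 0 ≤ (Real.sqrt (1 + t))⁻¹ := inv_nonneg.2 (Real.sqrt_nonneg _)
  have hw : ∀ w : ℝ, |w| ≤ 3 → Real.sin t * w ≤ 3 := fun w h => by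
    refine (le_abs_self _).trans ?_
    rw [abs_mul]; nlinarith [abs_nonneg (Real.sin t), abs_nonneg w]
  have hPQ : |Real.exp (Real.sin t * (1 - 2 * Real.arctan t))
        - Real.exp (Real.sin t * (1 - Real.pi))| ≤ Real.exp 3 * (8 * (Real.sqrt (1 + t))⁻¹ ^ 2) := by
    refine (aux_exp_diff 3 _ _ (hw _ (by rw [abs_le]; constructor <;> linarith))
      (hw _ (by rw [abs_le]; constructor <;> linarith))).trans ?_
    gcongr
    rw [show Real.sin t * (1 - 2 * Real.arctan t) - Real.sin t * (1 - Real.pi)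
      = Real.sin t * (Real.pi - 2 * Real.arctan t) by ring, abs_mul]
    nlinarith [abs_nonneg (Real.pi - 2 * Real.arctan t)]
  have hP0 := Real.exp_pos (Real.sin t * (1 - 2 * Real.arctan t))
  generalize Real.exp (Real.sin t * (1 - Real.pi)) / (1 - Real.pi) = h at *
  generalize Real.exp (Real.sin t * (1 - 2 * Real.arctan t))
        - Real.exp (Real.sin t * (1 - Real.pi)) = d at *
  generalize Real.exp (Real.sin t * (1 - 2 * Real.arctan t)) = P at *
  generalize Real.sqrt (t + 1) - Real.sqrt t - (Real.sqrt (1 + t))⁻¹ / 2 = b at *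
  generalize (Real.sqrt (1 + t))⁻¹ = r at *
  generalize Real.cos t = C at *
  have hL := Real.exp_pos 3
  generalize Real.exp 3 = L at *
  have e1 : |b * P + r / 2 * d| ≤ r^3 * L + r / 2 * (L * (8 * r^2)) := by
    refine (abs_add_le _ _).trans ?_
    rw [abs_mul, abs_mul, abs_of_pos hP0, abs_of_nonneg (by positivity : 0 ≤ r/2)]
    gcongr
  have e2 : |C * (b * P + r / 2 * d) + r^3 / 4 * h| ≤
      1 * (r^3 * L + r / 2 * (L * (8 * r^2))) + r^3 / 4 * L := by
    refine (abs_add_le _ _).trans ?_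
    rw [abs_mul, abs_mul, abs_of_nonneg (by positivity : 0 ≤ r^3/4)]
    gcongr
  refine e2.trans ?_
  have : 0 ≤ r^3 * L := by positivity
  nlinarith

lemma aux_gamma (t : ℝ) (ht : 0 ≤ t) :
    |Real.cos t * -(1 / (1 + t^2)) * Real.exp (Real.sin t * (2 * Real.arctan t - 1))|
      ≤ 6 * Real.exp 3 * (Real.sqrt (1 + t))⁻¹ ^ 3 := by
  have hpi' := Real.pi_lt_four
  have hC := Real.abs_cos_le_one t
  have ha0 := Real.arctan_nonneg.2 ht
  have ha1 := Real.arctan_lt_pi_div_two t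
  have hP := aux_exp3 (Real.sin t) (2 * Real.arctan t - 1) (Real.abs_sin_le_one t)
    (by rw [abs_le]; constructor <;> linarith)
  have hr0 : 0 ≤ (Real.sqrt (1 + t))⁻¹ := inv_nonneg.2 (Real.sqrt_nonneg _)
  have hs := aux_sq t ht
  rw [abs_mul, abs_mul, abs_neg, abs_of_pos (Real.exp_pos _), abs_of_pos (by positivity : 0 < 1/(1+t^2))]
  calc _ ≤ 1 * (2 * (Real.sqrt (1 + t))⁻¹ ^ 3) * Real.exp 3 := by gcongr
    _ ≤ _ := by
      have : 0 ≤ (Real.sqrt (1 + t))⁻¹ ^ 3 * Real.exp 3 := by positivity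
      nlinarith

lemma aux_small (t m : ℝ) (c : ℝ) (ht : 0 ≤ t) (hm : |m| ≤ 4 * (Real.sqrt (1 + t))⁻¹ ^ 3)
    (hc : |c| ≤ 1) : |c * m| ≤ 6 * Real.exp 3 * (Real.sqrt (1 + t))⁻¹ ^ 3 := by
  have hr0 : 0 ≤ (Real.sqrt (1 + t))⁻¹ ^ 3 := by positivity
  have hL : 1 ≤ Real.exp 3 := Real.one_le_exp (by norm_num)
  rw [abs_mul]
  nlinarith [abs_nonneg c, abs_nonneg m]

lemma aux_main_s12 (x1 x2 : ℝ → ℝ)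
    (h1 : ∀ t, 0 ≤ t → HasDerivWithinAt x1
      (Real.cos t * (2 * Real.arctan t * x1 t + (Real.sqrt (t + 1) - Real.sqrt t) * x2 t)) (Ici 0) t)
    (h2 : ∀ t, 0 ≤ t → HasDerivWithinAt x2
      (Real.cos t * (-(1 / (1 + t ^ 2)) * x1 t + (1 + Real.exp (-t)) * x2 t)) (Ici 0) t) :
    ∀ s t, 0 ≤ s → 0 ≤ t → auxV1 x1 x2 t ^ 2 + auxV2 x2 t ^ 2 ≤
      Real.exp (2 * (24 * Real.exp 3 * (1 + Real.exp 3)^2)) *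
        (auxV1 x1 x2 s ^ 2 + auxV2 x2 s ^ 2) := by
  let α : ℝ → ℝ := fun t => Real.sin t * -(2 * (1 / (1 + t^2)))
  let β : ℝ → ℝ := fun t => 
    Real.cos t * ((Real.sqrt (t + 1) - Real.sqrt t - (Real.sqrt (1 + t))⁻¹ / 2)
        * Real.exp (Real.sin t * (1 - 2 * Real.arctan t))
      + (Real.sqrt (1 + t))⁻¹ / 2 * (Real.exp (Real.sin t * (1 - 2 * Real.arctan t))
        - Real.exp (Real.sin t * (1 - Real.pi))))
      + (Real.sqrt (1 + t))⁻¹ ^ 3 / 4 * (Real.exp (Real.sin t * (1 - Real.pi)) / (1 - Real.pi))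
  let γ : ℝ → ℝ := fun t =>
    Real.cos t * -(1 / (1 + t^2)) * Real.exp (Real.sin t * (2 * Real.arctan t - 1))
  let δ : ℝ → ℝ := fun t => Real.cos t * Real.exp (-t)
  have hv2 : ∀ t, 0 ≤ t → HasDerivWithinAt (auxV2 x2)
      (γ t * (auxV1 x1 x2 t + auxB t * auxV2 x2 t) + δ t * auxV2 x2 t) (Ici 0) t := by
    intro t ht
    have h := ((Real.hasDerivAt_sin t).neg.exp.hasDerivWithinAt (s := Ici 0)).mul (h2 t ht)
    refine h.congr_deriv ?_
    have e : Real.exp (Real.sin t * (2 * Real.arctan t - 1)) *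
      Real.exp (-(Real.sin t * (2 * Real.arctan t))) = Real.exp (-Real.sin t) := by
      rw [← Real.exp_add]; ring_nf
    simp only [γ, δ, auxV1, auxV2, Pi.neg_apply]
    rw [← e]
    ring
  have hv1 : ∀ t, 0 ≤ t → HasDerivWithinAt (auxV1 x1 x2)
      (α t * (auxV1 x1 x2 t + auxB t * auxV2 x2 t) + β t * auxV2 x2 t
        - auxB t * (γ t * (auxV1 x1 x2 t + auxB t * auxV2 x2 t) + δ t * auxV2 x2 t)) (Ici 0) t := by
    intro t ht
    have h := ((((Real.hasDerivAt_sin t).mul ((Real.hasDerivAt_arctan t).const_mul 2)).neg.exp.hasDerivWithinAt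
      (s := Ici 0)).mul (h1 t ht)).sub (((auxB_deriv t ht).hasDerivWithinAt).mul (hv2 t ht))
    refine h.congr_deriv ?_
    have e : Real.exp (-(Real.sin t * (2 * Real.arctan t))) =
        Real.exp (Real.sin t * (1 - 2 * Real.arctan t)) * Real.exp (-Real.sin t) := by
      rw [← Real.exp_add]; ring_nf
    simp only [α, β, auxV1, auxV2, Pi.neg_apply, Pi.mul_apply]
    rw [e]
    ring
  have hL := Real.exp_pos 3
  refine aux_gron (24 * Real.exp 3 * (1 + Real.exp 3)^2) (by positivity)
    (fun t => auxV1 x1 x2 t ^ 2 + auxV2 x2 t ^ 2) _ (fun t => by positivity)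
    (fun t ht => ((hv1 t ht).pow 2).add ((hv2 t ht).pow 2)) ?_
  intro t ht
  have hsq := aux_sq t ht
  have hsq0 : 0 ≤ 1 / (1 + t^2) := by positivity
  have he := aux_e t ht
  have he0 := Real.exp_pos (-t)
  have := aux_alg (6 * Real.exp 3 * (Real.sqrt (1 + t))⁻¹ ^ 3) (Real.exp 3) (α t) (β t) (γ t) (δ t)
    (auxB t) (auxV1 x1 x2 t) (auxV2 x2 t) (by positivity) hL.le
    (aux_small t _ _ ht (by rw [abs_neg, abs_of_nonneg (by positivity)]; linarith)
      (Real.abs_sin_le_one t))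
    (aux_beta t ht) (aux_gamma t ht)
    (aux_small t _ _ ht (by rw [abs_of_pos he0]; linarith) (Real.abs_cos_le_one t))
    (auxB_bound t ht)
  norm_num at this ⊢
  refine this.trans (le_of_eq ?_)
  ring

/-- comparison of `V` with the Euclidean norm -/
lemma aux_upper (x1 x2 : ℝ → ℝ) (t : ℝ) (ht : 0 ≤ t) :
    auxV1 x1 x2 t ^ 2 + auxV2 x2 t ^ 2 ≤
      (3 * Real.exp 4 ^ 2 * (1 + Real.exp 3 ^ 2)) * (x1 t ^ 2 + x2 t ^ 2) := by
  have hpi' := Real.pi_lt_four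
  have ha0 := Real.arctan_nonneg.2 ht
  have ha1 := Real.arctan_lt_pi_div_two t
  have hS := Real.abs_sin_le_one t
  have g1 := aux_exp4 (Real.sin t) (-(2 * Real.arctan t)) hS (by rw [abs_le]; constructor <;> linarith)
  have g2 := aux_exp4 (Real.sin t) (-1) hS (by norm_num)
  have hB := auxB_bound t ht
  rw [mul_neg] at g1
  rw [mul_neg, mul_one] at g2
  have p1 := Real.exp_pos (-(Real.sin t * (2 * Real.arctan t)))
  have p2 := Real.exp_pos (-Real.sin t)
  unfold auxV1 auxV2
  generalize Real.exp (-(Real.sin t * (2 * Real.arctan t))) = P at *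
  generalize Real.exp (-Real.sin t) = Q at *
  have hB2 : auxB t ^ 2 ≤ Real.exp 3 ^ 2 := sq_le_sq.2 (by rwa [abs_of_pos (Real.exp_pos 3)])
  have hP2 : P^2 ≤ Real.exp 4 ^ 2 := by gcongr
  have hQ2 : Q^2 ≤ Real.exp 4 ^ 2 := by gcongr
  generalize auxB t = B at *
  generalize Real.exp 3 = L at *
  generalize Real.exp 4 = M at *
  generalize x1 t = x at *
  generalize x2 t = y at *
  have e1 : (P * x)^2 ≤ M^2 * x^2 := by rw [mul_pow]; gcongr
  have e2 : (Q * y)^2 ≤ M^2 * y^2 := by rw [mul_pow]; gcongr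
  have e3 : (B * (Q * y))^2 ≤ L^2 * (M^2 * y^2) := by rw [mul_pow]; gcongr
  have f1 : 0 ≤ L^2 * (M^2 * y^2) := by positivity
  have f2 : 0 ≤ L^2 * (M^2 * x^2) := by positivity
  have f3 : 0 ≤ M^2 * x^2 := by positivity
  have f4 : (P * x - B * (Q * y))^2 ≤ 2 * (P*x)^2 + 2 * (B * (Q * y))^2 := by
    nlinarith [sq_nonneg (P * x + B * (Q * y))]
  nlinarith

lemma aux_lower (x1 x2 : ℝ → ℝ) (t : ℝ) (ht : 0 ≤ t) :
    x1 t ^ 2 + x2 t ^ 2 ≤ (3 * Real.exp 4 ^ 2 * (1 + Real.exp 3 ^ 2)) *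
      (auxV1 x1 x2 t ^ 2 + auxV2 x2 t ^ 2) := by
  have hpi' := Real.pi_lt_four
  have ha0 := Real.arctan_nonneg.2 ht
  have ha1 := Real.arctan_lt_pi_div_two t
  have hS := Real.abs_sin_le_one t
  have g1 := aux_exp4 (Real.sin t) ((2 * Real.arctan t)) hS (by rw [abs_le]; constructor <;> linarith)
  have g2 := aux_exp4 (Real.sin t) (1) hS (by norm_num)
  have hB := auxB_bound t ht
  rw [mul_one] at g2
  have p1 := Real.exp_pos ((Real.sin t * (2 * Real.arctan t)))
  have p2 := Real.exp_pos (Real.sin t)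
  have q1 : x1 t = Real.exp ((Real.sin t * (2 * Real.arctan t))) *
      (auxV1 x1 x2 t + auxB t * auxV2 x2 t) := by
    unfold auxV1 auxV2; rw [Real.exp_neg]; field_simp; ring
  have q2 : x2 t = Real.exp (Real.sin t) * auxV2 x2 t := by
    unfold auxV2; rw [Real.exp_neg]; field_simp
  rw [q1, q2]
  generalize Real.exp ((Real.sin t * (2 * Real.arctan t))) = P at *
  generalize Real.exp (Real.sin t) = Q at *
  have hB2 : auxB t ^ 2 ≤ Real.exp 3 ^ 2 := sq_le_sq.2 (by rwa [abs_of_pos (Real.exp_pos 3)])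
  have hP2 : P^2 ≤ Real.exp 4 ^ 2 := by gcongr
  have hQ2 : Q^2 ≤ Real.exp 4 ^ 2 := by gcongr
  clear q1 q2
  generalize auxB t = B at *
  generalize Real.exp 3 = L at *
  generalize Real.exp 4 = M at *
  generalize auxV1 x1 x2 t = x at *
  generalize auxV2 x2 t = y at *
  have e2 : (Q * y)^2 ≤ M^2 * y^2 := by rw [mul_pow]; gcongr
  have e3 : (B * y)^2 ≤ L^2 * y^2 := by rw [mul_pow]; gcongr
  have f4 : (x + B * y)^2 ≤ 2 * x^2 + 2 * (L^2 * y^2) := by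
    nlinarith [sq_nonneg (x - B * y)]
  have e1 : (P * (x + B * y))^2 ≤ M^2 * (2 * x^2 + 2 * (L^2 * y^2)) := by rw [mul_pow]; gcongr
  have f1 : 0 ≤ L^2 * (M^2 * y^2) := by positivity
  have f2 : 0 ≤ L^2 * (M^2 * x^2) := by positivity
  have f3 : 0 ≤ M^2 * x^2 := by positivity
  have f5 : 0 ≤ M^2 * y^2 := by positivity
  nlinarith

/-- The system `A(t) = cos(t)·G̃(t)` on `[0, ∞)` is bistable in `ℝ²`:
all evolution operators are uniformly bounded. -/
theorem stmt12 :
    ∃ C > (0 : ℝ),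
      ∀ X : ℝ → ℝ → EuclideanSpace ℝ (Fin 2) →L[ℝ] EuclideanSpace ℝ (Fin 2),
        (∀ s ∈ Set.Ici (0 : ℝ),
          X s s = ContinuousLinearMap.id ℝ (EuclideanSpace ℝ (Fin 2)) ∧
          ∀ t ∈ Set.Ici (0 : ℝ),
            HasDerivWithinAt (fun τ => X τ s)
              ((Real.cos t •
                (Matrix.toEuclideanCLM (𝕜 := ℝ) (exGmat t) :
                  EuclideanSpace ℝ (Fin 2) →L[ℝ] EuclideanSpace ℝ (Fin 2))).comp (X t s))
              (Set.Ici 0) t) →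
        ∀ s ∈ Set.Ici (0 : ℝ), ∀ t ∈ Set.Ici (0 : ℝ), ‖X t s‖ ≤ C := by
  set c : ℝ := 3 * Real.exp 4 ^ 2 * (1 + Real.exp 3 ^ 2) with hc
  set k : ℝ := Real.exp (2 * (24 * Real.exp 3 * (1 + Real.exp 3)^2)) with hk
  have hc0 : 0 < c := by positivity
  have hk0 : 0 < k := Real.exp_pos _
  refine ⟨Real.sqrt (c * (k * c)), Real.sqrt_pos.2 (by positivity), ?_⟩
  intro X hX s hs t ht
  obtain ⟨hid, hd⟩ := hX s hs
  refine ContinuousLinearMap.opNorm_le_bound _ (Real.sqrt_nonneg _) ?_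
  intro v
  have hcomp : ∀ i : Fin 2, ∀ τ, 0 ≤ τ → HasDerivWithinAt (fun τ => (X τ s v) i)
      (Real.cos τ * (exGmat τ i 0 * (X τ s v) 0 + exGmat τ i 1 * (X τ s v) 1)) (Ici 0) τ := by
    intro i τ hτ
    have h := (((EuclideanSpace.proj i : EuclideanSpace ℝ (Fin 2) →L[ℝ] ℝ).comp
      (ContinuousLinearMap.apply ℝ (EuclideanSpace ℝ (Fin 2)) v)).hasFDerivAt
        (x := X τ s)).comp_hasDerivWithinAt τ (hd τ hτ)
    refine h.congr_deriv ?_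
    simp [Matrix.ofLp_toEuclideanCLM, Matrix.mulVec, dotProduct, Fin.sum_univ_two]
  have h1 := hcomp 0
  have h2 := hcomp 1
  simp only [exGmat, Matrix.of_apply, Matrix.cons_val', Matrix.cons_val_zero, Matrix.cons_val_one,
    Matrix.cons_val_fin_one] at h1 h2
  have hm := aux_main_s12 _ _ h1 h2 s t hs ht
  have hl := aux_lower (fun τ => (X τ s v) 0) (fun τ => (X τ s v) 1) t ht
  have hu := aux_upper (fun τ => (X τ s v) 0) (fun τ => (X τ s v) 1) s hs
  rw [← hc] at hl hu
  rw [← hk] at hm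
  simp only [hid, ContinuousLinearMap.id_apply] at hu
  have hfin : ((X t s v) 0)^2 + ((X t s v) 1)^2 ≤ c * (k * c) * (v 0 ^ 2 + v 1 ^ 2) := by
    refine hl.trans ?_
    rw [mul_assoc c, mul_assoc k]
    refine mul_le_mul_of_nonneg_left (hm.trans ?_) hc0.le
    exact mul_le_mul_of_nonneg_left hu hk0.le
  rw [EuclideanSpace.norm_eq, EuclideanSpace.norm_eq, ← Real.sqrt_mul (by positivity)]
  refine Real.sqrt_le_sqrt ?_
  simpa [Fin.sum_univ_two, Real.norm_eq_abs, sq_abs] using hfin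
end

section
/- Let M, J ⊆ ℝ be open intervals with 0 ∈ M and [−1, 1] ⊆ J, let E be the trivial rank-r vector bundle over M × J with a smooth linear connection ∇, let a ∈ M with a < 0, and let γ : [a, 0) → ℝ² be γ(t) = (t, sin(1/t)). Then there exists C > 0 such that for all b ∈ [a, 0) and all vectors v in the fiber over γ(a), (1/C)‖v‖ ≤ ‖P_{γ|[a,b]}(v)‖ ≤ C‖v‖, where P denotes parallel transport with respect to ∇. -/
open MeasureTheory Set

open Filter Topology

lemma aux_exists {F : Type*} [NormedAddCommGroup F] [NormedSpace ℝ F] [CompleteSpace F]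
    (T : ℝ → F →L[ℝ] F) (hT : Continuous T) (K : ℝ) (hK0 : 0 ≤ K)
    (hK : ∀ y x, ‖T y x‖ ≤ K * ‖x‖) (c : ℝ) (u0 : F) :
    ∃ u : ℝ → F, u c = u0 ∧ ∀ y, HasDerivAt u (T y (u y)) y := by
  let H : ℕ → ℝ → F := fun n => Nat.rec (fun _ => u0) (fun _ h y => ∫ η in c..y, T η (h η)) n
  have H0 : ∀ y, H 0 y = u0 := fun y => rfl
  have HS : ∀ n y, H (n+1) y = ∫ η in c..y, T η (H n η) := fun n y => rfl
  have Hc : ∀ n, Continuous (H n) := by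
    intro n
    induction n with
    | zero => exact continuous_const
    | succ n ih =>
      have : Continuous fun η => T η (H n η) := hT.clm_apply ih
      exact continuous_iff_continuousAt.2 fun y =>
        (this.integral_hasStrictDerivAt c y).hasDerivAt.continuousAt
  have Hd : ∀ n y, HasDerivAt (H (n+1)) (T y (H n y)) y := fun n y =>
    ((hT.clm_apply (Hc n)).integral_hasStrictDerivAt c y).hasDerivAt
  have Hb : ∀ n y, ‖H n y‖ ≤ ‖u0‖ * ((K * |y - c|) ^ n / n.factorial) := by
    intro n
    induction n with
    | zero => intro y; simp [H0]
    | succ n ih =>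
      intro y
      rw [HS]
      calc ‖∫ η in c..y, T η (H n η)‖ ≤ ∫ η in uIoc c y, ‖T η (H n η)‖ :=
            intervalIntegral.norm_integral_le_integral_norm_uIoc
        _ ≤ ∫ η in uIoc c y, (‖u0‖ * K ^ (n+1) / n.factorial) * |η - c| ^ n := by
            apply MeasureTheory.integral_mono
            · exact ((hT.clm_apply (Hc n)).norm.intervalIntegrable c y).def'
            · have : Continuous fun η : ℝ => (‖u0‖ * K ^ (n+1) / n.factorial) * |η - c| ^ n := by
                fun_prop
              exact (this.intervalIntegrable c y).def'
            · intro η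
              refine (hK _ _).trans ((mul_le_mul_of_nonneg_left (ih η) hK0).trans (le_of_eq ?_))
              simp only [mul_pow]; ring
        _ = _ := by
            rw [MeasureTheory.integral_const_mul, integral_pow_abs_sub_uIoc, Nat.factorial_succ]
            push_cast
            have : (n.factorial : ℝ) ≠ 0 := by positivity
            field_simp
            rw [mul_pow]; ring
  have Hs : ∀ y, Summable fun n => H n y := fun y =>
    Summable.of_norm_bounded ((Real.summable_pow_div_factorial _).mul_left _) (fun n => Hb n y)
  refine ⟨fun y => ∑' n, H n y, ?_, ?_⟩
  · show ∑' n, H n c = u0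
    rw [tsum_eq_single 0]
    · exact H0 c
    · intro n hn
      obtain ⟨m, rfl⟩ := Nat.exists_eq_succ_of_ne_zero hn
      simp [HS]
  · intro y
    have e : (fun y => ∑' n, H n y) = fun y => u0 + ∑' n, H (n+1) y := by
      funext z
      rw [(Hs z).tsum_eq_zero_add, H0]
    rw [e]
    refine HasDerivAt.const_add _ ?_
    have e2 : T y (∑' n, H n y) = ∑' n, T y (H n y) := (T y).map_tsum (Hs y)
    have e3 : u0 + ∑' n, H (n+1) y = ∑' n, H n y := by rw [(Hs y).tsum_eq_zero_add, H0]
    simp only [e3]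
    rw [e2]
    set R := |y - c| + 1
    have hR : (0:ℝ) < R := by positivity
    refine hasDerivAt_tsum_of_isPreconnected (t := Metric.ball c R) (y₀ := y)
      (u := fun n : ℕ => K * (‖u0‖ * ((K * R) ^ n / n.factorial)))
      (((Real.summable_pow_div_factorial _).mul_left _).mul_left _) Metric.isOpen_ball
      (convex_ball c R).isPreconnected (fun n z _ => Hd n z) ?_ ?_ ?_ ?_
    · intro n z hz
      refine (hK _ _).trans (mul_le_mul_of_nonneg_left ((Hb n z).trans ?_) hK0)
      have : |z - c| ≤ R := by
        have := Metric.mem_ball.1 hz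
        rw [Real.dist_eq] at this; exact this.le
      gcongr
    · simp [R, Real.dist_eq]
    · exact (summable_nat_add_iff 1).2 (Hs y)
    · simp [R, Real.dist_eq]

lemma aux_gron_s18 {F : Type*} [NormedAddCommGroup F] (f : ℝ → F) (a b K : ℝ) (hab : a ≤ b)
    (h : ∀ t ∈ Icc a b, ∀ r, K * ‖f t‖ < r →
      ∀ᶠ z in 𝓝[Icc a b] t, ‖f z - f t‖ ≤ r * |z - t|) :
    ‖f b‖ ≤ ‖f a‖ * Real.exp (K * (b - a)) := by
  have hc : ContinuousOn f (Icc a b) := by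
    intro t ht
    have h1 := h t ht (K * ‖f t‖ + 1) (by linarith)
    rw [ContinuousWithinAt, tendsto_iff_norm_sub_tendsto_zero]
    refine squeeze_zero' (Eventually.of_forall fun _ => norm_nonneg _) h1 ?_
    have : Continuous fun z : ℝ => (K * ‖f t‖ + 1) * |z - t| := by fun_prop
    have h2 := this.tendsto t
    simp only [sub_self, abs_zero, mul_zero] at h2
    exact h2.mono_left nhdsWithin_le_nhds
  have := le_gronwallBound_of_liminf_deriv_right_le (f := fun t => ‖f t‖)
    (f' := fun t => K * ‖f t‖) (δ := ‖f a‖) (K := K) (ε := 0) hc.norm ?_ le_rfl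
    (fun x _ => by simp) b ⟨hab, le_rfl⟩
  · rwa [gronwallBound_ε0] at this
  · intro t ht r hr
    obtain ⟨r', h1, h2⟩ := exists_between hr
    have h3 := h t ⟨ht.1, ht.2.le⟩ r' h1
    have h4 : 𝓝[>] t ≤ 𝓝[Icc a b] t := by
      rw [← nhdsWithin_Ioo_eq_nhdsGT ht.2]
      exact nhdsWithin_mono _ fun z hz => ⟨ht.1.trans hz.1.le, hz.2.le⟩
    refine Eventually.frequently ?_
    filter_upwards [h4 h3, self_mem_nhdsWithin] with z hz hz2
    have hz2 : 0 < z - t := sub_pos.2 hz2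
    have hz : ‖f z - f t‖ ≤ r' * |z - t| := hz
    rw [abs_of_pos hz2] at hz
    refine lt_of_le_of_lt ?_ h2
    rw [inv_mul_le_iff₀ hz2, mul_comm]
    exact (norm_sub_norm_le _ _).trans hz

lemma aux_gron' {F : Type*} [NormedAddCommGroup F] (f : ℝ → F) (a b K : ℝ) (hab : a ≤ b)
    (h : ∀ t ∈ Icc a b, ∀ r, K * ‖f t‖ < r →
      ∀ᶠ z in 𝓝[Icc a b] t, ‖f z - f t‖ ≤ r * |z - t|) :
    ‖f a‖ ≤ ‖f b‖ * Real.exp (K * (b - a)) := by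
  have := aux_gron_s18 (fun t => f (a + b - t)) a b K hab ?_
  · simpa using this
  · intro t ht r hr
    have ht' : a + b - t ∈ Icc a b := ⟨by linarith [ht.2], by linarith [ht.1]⟩
    have h1 := h _ ht' r hr
    have h2 : Tendsto (fun z => a + b - z) (𝓝[Icc a b] t) (𝓝[Icc a b] (a + b - t)) := by
      refine tendsto_nhdsWithin_iff.2 ⟨?_, ?_⟩
      · have : Continuous fun z : ℝ => a + b - z := by fun_prop
        exact (this.tendsto t).mono_left nhdsWithin_le_nhds
      · filter_upwards [self_mem_nhdsWithin] with z hz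
        exact ⟨by linarith [hz.2], by linarith [hz.1]⟩
    filter_upwards [h2.eventually h1] with z hz
    have e : a + b - z - (a + b - t) = -(z - t) := by ring
    rwa [e, abs_neg] at hz

lemma aux_bound {F : Type*} [NormedAddCommGroup F] [NormedSpace ℝ F] (u u' : ℝ → F)
    (hu : ∀ y, HasDerivAt u (u' y) y) (δ K ε : ℝ) (hK : 0 < K) (hδ : 0 ≤ δ) (hε : 0 ≤ ε)
    (h0 : ‖u (-1)‖ ≤ δ) (hb : ∀ y, y ∈ Icc (-1 : ℝ) 1 → ‖u' y‖ ≤ K * ‖u y‖ + ε) :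
    ∀ y ∈ Icc (-1 : ℝ) 1, ‖u y‖ ≤ (δ + ε / K) * Real.exp (K * 2) := by
  intro y hy
  have := norm_le_gronwallBound_of_norm_deriv_right_le (f := u) (f' := u') (a := -1) (b := 1)
    (fun z _ => (hu z).continuousAt.continuousWithinAt) (fun z _ => (hu z).hasDerivWithinAt) h0
    (fun z hz => hb z ⟨hz.1, hz.2.le⟩) y hy
  refine this.trans ((gronwallBound_mono hδ hε hK.le (show y - -1 ≤ 2 by linarith [hy.2])).trans ?_)
  rw [gronwallBound_of_K_ne_0 hK.ne']
  have : 0 ≤ ε / K := by positivity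
  simp only
  nlinarith

lemma aux_gauge {F : Type*} [NormedAddCommGroup F] [NormedSpace ℝ F] [FiniteDimensional ℝ F]
    (S : Set ℝ) (β : ℝ → ℝ → F →L[ℝ] F) (K L : ℝ) (hK : 0 < K) (hL : 0 ≤ L)
    (hc : ∀ s ∈ S, Continuous (β s)) (hb : ∀ s ∈ S, ∀ y, ‖β s y‖ ≤ K)
    (hl : ∀ s ∈ S, ∀ s' ∈ S, ∀ y, ‖β s y - β s' y‖ ≤ L * |s - s'|) :
    ∃ C > 0, ∃ W V : ℝ → ℝ → F →L[ℝ] F,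
      (∀ s ∈ S, ∀ y, HasDerivAt (W s) (W s y * β s y) y) ∧
      (∀ s ∈ S, ∀ y, V s y * W s y = 1) ∧
      (∀ s ∈ S, ∀ y ∈ Icc (-1 : ℝ) 1, ‖W s y‖ ≤ C ∧ ‖V s y‖ ≤ C) ∧
      (∀ s ∈ S, ∀ s' ∈ S, ∀ y ∈ Icc (-1 : ℝ) 1, ‖W s y - W s' y‖ ≤ C * |s - s'|) := by
  have : CompleteSpace F := FiniteDimensional.complete ℝ F
  have hW : ∀ s, ∃ u : ℝ → F →L[ℝ] F, s ∈ S → u (-1) = 1 ∧ ∀ y, HasDerivAt u (u y * β s y) y := by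
    intro s
    by_cases hs : s ∈ S
    · obtain ⟨u, h1, h2⟩ := aux_exists
        (fun y => (ContinuousLinearMap.mul ℝ (F →L[ℝ] F)).flip (β s y))
        ((ContinuousLinearMap.continuous _).comp (hc s hs)) K hK.le (fun y x => by
          rw [ContinuousLinearMap.flip_apply, ContinuousLinearMap.mul_apply', mul_comm K]
          exact (norm_mul_le _ _).trans (mul_le_mul_of_nonneg_left (hb s hs y) (norm_nonneg _)))
        (-1) 1
      exact ⟨u, fun _ => ⟨h1, h2⟩⟩
    · exact ⟨0, fun h => absurd h hs⟩
  have hV : ∀ s, ∃ u : ℝ → F →L[ℝ] F, s ∈ S → u (-1) = 1 ∧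
      ∀ y, HasDerivAt u (- β s y * u y) y := by
    intro s
    by_cases hs : s ∈ S
    · obtain ⟨u, h1, h2⟩ := aux_exists
        (fun y => (ContinuousLinearMap.mul ℝ (F →L[ℝ] F)) (- β s y))
        ((ContinuousLinearMap.continuous _).comp (hc s hs).neg) K hK.le (fun y x => by
          rw [ContinuousLinearMap.mul_apply']
          refine (norm_mul_le _ _).trans (mul_le_mul_of_nonneg_right ?_ (norm_nonneg _))
          rw [norm_neg]; exact hb s hs y)
        (-1) 1
      exact ⟨u, fun _ => ⟨h1, h2⟩⟩
    · exact ⟨0, fun h => absurd h hs⟩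
  choose W hW using hW
  choose V hV using hV
  have h1 : ‖(1 : F →L[ℝ] F)‖ ≤ 1 := ContinuousLinearMap.norm_id_le
  set C1 := Real.exp (K * 2) with hC1
  have hWb : ∀ s ∈ S, ∀ y ∈ Icc (-1 : ℝ) 1, ‖W s y‖ ≤ C1 := by
    intro s hs y hy
    have := aux_bound (W s) _ (hW s hs).2 1 K 0 hK zero_le_one le_rfl (by rwa [(hW s hs).1])
      (fun y _ => by
        rw [add_zero, mul_comm K]
        exact (norm_mul_le _ _).trans (mul_le_mul_of_nonneg_left (hb s hs y) (norm_nonneg _))) y hy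
    simpa using this
  have hVb : ∀ s ∈ S, ∀ y ∈ Icc (-1 : ℝ) 1, ‖V s y‖ ≤ C1 := by
    intro s hs y hy
    have := aux_bound (V s) _ (hV s hs).2 1 K 0 hK zero_le_one le_rfl (by rwa [(hV s hs).1])
      (fun y _ => by
        rw [add_zero]
        refine (norm_mul_le _ _).trans (mul_le_mul_of_nonneg_right ?_ (norm_nonneg _))
        rw [norm_neg]; exact hb s hs y) y hy
    simpa using this
  have hC1p : 0 < C1 := Real.exp_pos _
  refine ⟨max C1 (C1 * L / K * C1), lt_max_of_lt_left hC1p, W, V, fun s hs => (hW s hs).2, ?_,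
    fun s hs y hy => ⟨(hWb s hs y hy).trans (le_max_left _ _),
      (hVb s hs y hy).trans (le_max_left _ _)⟩, ?_⟩
  · intro s hs y
    have hd : ∀ y, HasDerivAt (fun y => W s y * V s y) 0 y := by
      intro y
      have h := ((hW s hs).2 y).mul ((hV s hs).2 y)
      have e : W s y * β s y * V s y + W s y * (-β s y * V s y) = 0 := by noncomm_ring
      rw [e] at h
      exact h
    have e : W s y * V s y = 1 := by
      have := is_const_of_deriv_eq_zero (fun y => (hd y).differentiableAt)
        (fun y => (hd y).deriv) y (-1)
      simpa [(hW s hs).1, (hV s hs).1] using this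
    have e2 : (W s y : F →ₗ[ℝ] F) * (V s y : F →ₗ[ℝ] F) = 1 := by
      ext x; exact congrArg (fun f : F →L[ℝ] F => f x) e
    rw [mul_eq_one_comm] at e2
    ext x
    exact congrArg (fun f : F →ₗ[ℝ] F => f x) e2
  · intro s hs s' hs' y hy
    have := aux_bound (fun y => W s y - W s' y) _
      (fun y => ((hW s hs).2 y).sub ((hW s' hs').2 y)) 0 K (C1 * (L * |s - s'|)) hK le_rfl
      (by positivity) (by simp [(hW s hs).1, (hW s' hs').1]) (fun y hy => by
        have e : W s y * β s y - W s' y * β s' y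
          = (W s y - W s' y) * β s y + W s' y * (β s y - β s' y) := by noncomm_ring
        rw [e, mul_comm K]
        refine (norm_add_le _ _).trans (add_le_add ?_ ?_)
        · exact (norm_mul_le _ _).trans (mul_le_mul_of_nonneg_left (hb s hs y) (norm_nonneg _))
        · exact (norm_mul_le _ _).trans (mul_le_mul (hWb s' hs' y hy) (hl s hs s' hs' y)
            (norm_nonneg _) hC1p.le)) y hy
    refine this.trans ?_
    refine le_trans (le_of_eq ?_) (mul_le_mul_of_nonneg_right (le_max_right _ _) (abs_nonneg _))
    rw [← hC1]; ring

/-- Parallel transport along the topologist's sine curve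
`γ(t) = (t, sin(1/t))`, `t ∈ [a, 0)`, in the trivial rank-`r` bundle over `M × J` with a
smooth connection (given by its connection form `ω`), is uniformly bounded above and
below. Parallel transport along `γ|[a,b]` is given by the solution `X` of
`X'(t) = −ω(γ(t))(γ'(t)) ∘ X(t)`, `X(a) = id`. -/
theorem stmt18 (M J : Set ℝ) (hMo : IsOpen M) (hMc : M.OrdConnected)
    (hJo : IsOpen J) (hJc : J.OrdConnected)
    (h0M : (0 : ℝ) ∈ M) (hJ1 : Set.Icc (-1 : ℝ) 1 ⊆ J)
    (r : ℕ)
    (ω : ℝ × ℝ → (ℝ × ℝ) →L[ℝ] ((Fin r → ℝ) →L[ℝ] (Fin r → ℝ)))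
    (hω : ContDiffOn ℝ (⊤ : ℕ∞) ω (M ×ˢ J))
    (a : ℝ) (haM : a ∈ M) (ha0 : a < 0) :
    ∃ C > (0 : ℝ), ∀ b ∈ Set.Ico a (0 : ℝ),
      ∀ X : ℝ → (Fin r → ℝ) →L[ℝ] (Fin r → ℝ),
        X a = ContinuousLinearMap.id ℝ (Fin r → ℝ) →
        (∀ t ∈ Set.Icc a b,
          HasDerivWithinAt X
            (-((ω (t, Real.sin (1 / t))) (1, -(Real.cos (1 / t)) / t ^ 2)).comp (X t))
            (Set.Icc a b) t) →
        ∀ v : Fin r → ℝ, (1 / C) * ‖v‖ ≤ ‖X b v‖ ∧ ‖X b v‖ ≤ C * ‖v‖ := by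
  set Q : Set (ℝ × ℝ) := Icc a 0 ×ˢ Icc (-1 : ℝ) 1 with hQ
  have hQc : IsCompact Q := isCompact_Icc.prod isCompact_Icc
  have hQs : Q ⊆ M ×ˢ J := prod_mono (hMc.out haM h0M) hJ1
  have hωc : ContinuousOn ω Q := hω.continuousOn.mono hQs
  obtain ⟨K0, hK0⟩ := hQc.exists_bound_of_continuousOn (f := ω) hωc
  obtain ⟨L, hL⟩ : ∃ L, LipschitzOnWith L ω Q := by
    apply LocallyLipschitzOn.exists_lipschitzOnWith_of_compact hQc
    intro q hq
    have h1 : ContDiffAt ℝ (⊤ : ℕ∞) ω q := hω.contDiffAt ((hMo.prod hJo).mem_nhds (hQs hq))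
    obtain ⟨L, t, ht, h⟩ := (h1.of_le (m := 1) (by exact_mod_cast le_top)).exists_lipschitzOnWith
    exact ⟨L, t, mem_nhdsWithin_of_mem_nhds ht, h⟩
  set K := |K0| + 1 with hKd
  have hK : 0 < K := by positivity
  have hKb : ∀ q ∈ Q, ‖ω q‖ ≤ K := fun q hq =>
    (hK0 q hq).trans ((le_abs_self _).trans (by simp [hKd]))
  have n1 : ‖((0 : ℝ), (1 : ℝ))‖ ≤ 1 := by simp [Prod.norm_def]
  have n2 : ‖((1 : ℝ), (0 : ℝ))‖ ≤ 1 := by simp [Prod.norm_def]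
  set p : ℝ → ℝ := fun y => max (-1) (min y 1) with hp
  have hpm : ∀ y, p y ∈ Icc (-1 : ℝ) 1 := fun y =>
    ⟨le_max_left _ _, max_le (by norm_num) (min_le_right _ _)⟩
  have hpe : ∀ y ∈ Icc (-1 : ℝ) 1, p y = y := fun y hy => by
    simp [hp, min_eq_left hy.2, max_eq_right hy.1]
  have hpc : Continuous p := by fun_prop
  obtain ⟨C, hC, W, V, hW, hVW, hWV, hWl⟩ := aux_gauge (F := Fin r → ℝ) (Icc a 0)
    (fun s y => ω (s, p y) (0, 1)) K L hK L.2
    (by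
      intro s hs
      have : Continuous fun y => ω (s, p y) :=
        hωc.comp_continuous (by fun_prop) (fun y => ⟨hs, hpm y⟩)
      exact this.clm_apply continuous_const)
    (by
      intro s hs y
      refine ((ω (s, p y)).le_opNorm _).trans ?_
      calc _ ≤ K * 1 := mul_le_mul (hKb _ ⟨hs, hpm y⟩) n1 (norm_nonneg _) hK.le
        _ = K := mul_one K)
    (by
      intro s hs s' hs' y
      show ‖(ω (s, p y) - ω (s', p y)) (0, 1)‖ ≤ L * |s - s'|
      refine ((ω (s, p y) - ω (s', p y)).le_opNorm _).trans ?_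
      have := hL.norm_sub_le (x := (s, p y)) (y := (s', p y)) ⟨hs, hpm y⟩ ⟨hs', hpm y⟩
      have e : ‖(s, p y) - (s', p y)‖ = |s - s'| := by
        simp [Prod.norm_def]
      rw [e] at this
      calc _ ≤ (L * |s - s'|) * 1 := mul_le_mul this n1 (norm_nonneg _) (by positivity)
        _ = _ := mul_one _)
  set K' := (C + C * K) * C with hK'
  have hK'0 : 0 ≤ K' := by positivity
  set G := Real.exp (K' * (0 - a)) with hG
  have hGp : 0 < G := Real.exp_pos _
  refine ⟨C * G * C, by positivity, ?_⟩
  intro b hb X hX0 hX v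
  set Y : ℝ → ℝ := fun t => Real.sin (1 / t) with hY
  have hYm : ∀ t, Y t ∈ Icc (-1 : ℝ) 1 := fun t => ⟨Real.neg_one_le_sin _, Real.sin_le_one _⟩
  have hsub : ∀ t ∈ Icc a b, t ∈ Icc a 0 := fun t ht => ⟨ht.1, ht.2.trans hb.2.le⟩
  have hYd : ∀ t ∈ Icc a b, HasDerivAt Y (-(Real.cos (1 / t)) / t ^ 2) t := by
    intro t ht
    have ht0 : t ≠ 0 := (lt_of_le_of_lt ht.2 hb.2).ne
    have h1 : HasDerivAt (fun t : ℝ => 1 / t) (-(t ^ 2)⁻¹) t := by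
      simpa using hasDerivAt_inv ht0
    have h2 := h1.sin
    refine h2.congr_deriv ?_
    ring
  have hx : ∀ t ∈ Icc a b, HasDerivWithinAt (fun t => X t v)
      (-((ω (t, Y t)) (1, -(Real.cos (1 / t)) / t ^ 2) (X t v))) (Icc a b) t := by
    intro t ht
    have h := (hX t ht).clm_apply (hasDerivWithinAt_const t (Icc a b) v)
    refine h.congr_deriv ?_
    simp [hY]
  set f : ℝ → (Fin r → ℝ) := fun t => W t (Y t) (X t v) with hf
  have hxf : ∀ t ∈ Icc a b, ‖X t v‖ ≤ C * ‖f t‖ := by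
    intro t ht
    have e : V t (Y t) (f t) = X t v :=
      congrArg (fun g : (Fin r → ℝ) →L[ℝ] (Fin r → ℝ) => g (X t v)) (hVW t (hsub t ht) (Y t))
    rw [← e]
    exact (V t (Y t)).le_of_opNorm_le (hWV t (hsub t ht) _ (hYm t)).2 _
  have hfx : ∀ t ∈ Icc a b, ‖f t‖ ≤ C * ‖X t v‖ := fun t ht =>
    (W t (Y t)).le_of_opNorm_le (hWV t (hsub t ht) _ (hYm t)).1 _
  have key : ∀ t ∈ Icc a b, ∀ ρ, K' * ‖f t‖ < ρ →
      ∀ᶠ z in 𝓝[Icc a b] t, ‖f z - f t‖ ≤ ρ * |z - t| := by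
    intro t ht ρ hρ
    have hts := hsub t ht
    have hg : HasDerivWithinAt (fun τ => W t (Y τ) (X τ v))
        (-(W t (Y t) (ω (t, Y t) (1, 0) (X t v)))) (Icc a b) t := by
      have h1 := ((hW t hts (Y t)).scomp t (hYd t ht)).hasDerivWithinAt (s := Icc a b)
      have h2 := h1.clm_apply (hx t ht)
      refine h2.congr_deriv ?_
      have e : ((1 : ℝ), -(Real.cos (1 / t)) / t ^ 2)
          = (1, 0) + (-(Real.cos (1 / t)) / t ^ 2) • ((0 : ℝ), (1 : ℝ)) := by simp
      rw [e, map_add, map_smul, hpe _ (hYm t)]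
      simp only [ContinuousLinearMap.smul_apply, ContinuousLinearMap.mul_apply,
        ContinuousLinearMap.add_apply, map_neg, map_add, map_smul, Function.comp]
      abel
    have hn : ‖-(W t (Y t) (ω (t, Y t) (1, 0) (X t v)))‖ ≤ C * K * ‖X t v‖ := by
      rw [norm_neg, mul_assoc]
      refine ((W t (Y t)).le_of_opNorm_le (hWV t hts _ (hYm t)).1 _).trans ?_
      refine mul_le_mul_of_nonneg_left (ContinuousLinearMap.le_of_opNorm_le _ ?_ _) hC.le
      refine ((ω (t, Y t)).le_opNorm _).trans ?_
      calc _ ≤ K * 1 := mul_le_mul (hKb _ ⟨hts, hYm t⟩) n2 (norm_nonneg _) hK.le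
        _ = K := mul_one K
    have hlt : C * ‖X t v‖ + C * K * ‖X t v‖ < ρ := by
      refine lt_of_le_of_lt ?_ hρ
      calc C * ‖X t v‖ + C * K * ‖X t v‖ = (C + C * K) * ‖X t v‖ := by ring
        _ ≤ (C + C * K) * (C * ‖f t‖) := mul_le_mul_of_nonneg_left (hxf t ht) (by positivity)
        _ = K' * ‖f t‖ := by rw [hK']; ring
    set d := (ρ - (C * ‖X t v‖ + C * K * ‖X t v‖)) / 2 with hd
    have hdp : 0 < d := by rw [hd]; linarith
    have ev1 := hg.limsup_norm_slope_le (r := C * K * ‖X t v‖ + d) (by linarith)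
    have hcx : Tendsto (fun τ => C * ‖X τ v‖) (𝓝[Icc a b] t) (𝓝 (C * ‖X t v‖)) :=
      ((hx t ht).continuousWithinAt.norm.tendsto).const_mul C
    have ev2 := hcx.eventually (gt_mem_nhds (show C * ‖X t v‖ < C * ‖X t v‖ + d by linarith))
    filter_upwards [ev1, ev2, self_mem_nhdsWithin] with z h1 h2 hz
    rcases eq_or_ne z t with rfl | hne
    · simp
    have hpos : 0 < |z - t| := abs_pos.2 (sub_ne_zero.2 hne)
    rw [Real.norm_eq_abs, inv_mul_lt_iff₀ hpos] at h1
    have e : f z - f t = (W z (Y z) - W t (Y z)) (X z v)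
        + (W t (Y z) (X z v) - W t (Y t) (X t v)) := by
      simp [hf]
    rw [e]
    refine (norm_add_le _ _).trans ?_
    have h3 : ‖(W z (Y z) - W t (Y z)) (X z v)‖ ≤ C * |z - t| * ‖X z v‖ :=
      ContinuousLinearMap.le_of_opNorm_le _ (hWl z (hsub z hz) t hts _ (hYm z)) _
    have h4 : ρ = (C * ‖X t v‖ + d) + (C * K * ‖X t v‖ + d) := by rw [hd]; ring
    rw [h4]
    nlinarith
  have hab := hb.1
  have hGG : Real.exp (K' * (b - a)) ≤ G :=
    Real.exp_le_exp.2 (mul_le_mul_of_nonneg_left (by linarith [hb.2]) hK'0)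
  have ma : a ∈ Icc a b := ⟨le_rfl, hab⟩
  have mb : b ∈ Icc a b := ⟨hab, le_rfl⟩
  have g1 := (aux_gron_s18 f a b K' hab key).trans (mul_le_mul_of_nonneg_left hGG (norm_nonneg _))
  have g2 := (aux_gron' f a b K' hab key).trans (mul_le_mul_of_nonneg_left hGG (norm_nonneg _))
  have xa : X a v = v := by rw [hX0]; rfl
  have a1 := hxf a ma
  have a2 := hfx a ma
  have b1 := hxf b mb
  have b2 := hfx b mb
  rw [xa] at a1 a2
  constructor
  · rw [one_div, inv_mul_le_iff₀ (by positivity)]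
    calc ‖v‖ ≤ C * ‖f a‖ := a1
      _ ≤ C * (‖f b‖ * G) := by gcongr
      _ ≤ C * ((C * ‖X b v‖) * G) := by gcongr
      _ = _ := by ring
  · calc ‖X b v‖ ≤ C * ‖f b‖ := b1
      _ ≤ C * (‖f a‖ * G) := by gcongr
      _ ≤ C * ((C * ‖v‖) * G) := by gcongr
      _ = _ := by ring
end
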